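/- arXiv:1012.1513 — 9 statements merged into one kernel-verified Lean document; each statement's English description precedes it below -/
import Mathlib

section
/- Let p(a,b|x,y) (a,b,x,y ∈ {0,1}) arise from a local hidden-variable model with finite shared randomness: there is a finite index set Λ, weights q(λ) ≥ 0 with ∑_λ q(λ) = 1, and local response probabilities α_λ(a|x) ∈ [0,1] with α_λ(0|x)+α_λ(1|x)=1 and β_λ(b|y) ∈ [0,1] with β_λ(0|y)+β_λ(1|y)=1, such that p(a,b|x,y) = ∑_λ q(λ)·α_λ(a|x)·β_λ(b|y). Then for every τ ≥ 1, the tilted-CH value satisfies S^(τ)(p) ≤ 0. -/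
/-- The tilted-CH value `S^(τ)(p)` of a family of conditional probabilities
`p a b x y = p(a,b|x,y)` with `a, b, x, y ∈ {0,1}`. -/
noncomputable def tiltedCHval (τ : ℝ) (p : Fin 2 → Fin 2 → Fin 2 → Fin 2 → ℝ) : ℝ :=
  p 0 0 0 0 + (1 - τ) * p 0 0 0 1 - τ * p 0 1 0 1
    + (1 - τ) * p 0 0 1 0 - τ * p 1 0 1 0 - p 0 0 1 1

theorem ch_aux (a c b d : ℝ) (ha : 0 ≤ a) (ha1 : a ≤ 1) (hc : 0 ≤ c) (hc1 : c ≤ 1)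
    (hb : 0 ≤ b) (hb1 : b ≤ 1) (hd : 0 ≤ d) (hd1 : d ≤ 1) :
    a * b + a * d + c * b - c * d - a - b ≤ 0 := by
  have hab1 : 0 ≤ 1 - a * b := by nlinarith
  have h1 : 0 ≤ c * d * (1 - a * b) := by positivity
  have h2 : 0 ≤ c * (1 - d) * (a * (1 - b)) :=
    mul_nonneg (mul_nonneg hc (by linarith)) (mul_nonneg ha (by linarith))
  have h3 : 0 ≤ (1 - c) * d * (b * (1 - a)) :=
    mul_nonneg (mul_nonneg (by linarith) hd) (mul_nonneg hb (by linarith))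
  have h4 : 0 ≤ (1 - c) * (1 - d) * (a * (1 - b) + b) :=
    mul_nonneg (mul_nonneg (by linarith) (by linarith))
      (add_nonneg (mul_nonneg ha (by linarith)) hb)
  linarith

/-- probabilities arising from a local hidden-variable model with finite
shared randomness satisfy the tilted-CH inequality `S^(τ)(p) ≤ 0` for every `τ ≥ 1`. -/
theorem tiltedCH_le_zero_of_LHV
    (p : Fin 2 → Fin 2 → Fin 2 → Fin 2 → ℝ)
    (Λ : Type) [Fintype Λ]
    (q : Λ → ℝ) (α β : Λ → Fin 2 → Fin 2 → ℝ)
    (hq : ∀ l, 0 ≤ q l) (hqsum : ∑ l, q l = 1)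
    (hα0 : ∀ l a x, 0 ≤ α l a x) (hα1 : ∀ l a x, α l a x ≤ 1)
    (hαnorm : ∀ l x, α l 0 x + α l 1 x = 1)
    (hβ0 : ∀ l b y, 0 ≤ β l b y) (hβ1 : ∀ l b y, β l b y ≤ 1)
    (hβnorm : ∀ l y, β l 0 y + β l 1 y = 1)
    (hp : ∀ a b x y, p a b x y = ∑ l, q l * α l a x * β l b y)
    (τ : ℝ) (hτ : 1 ≤ τ) :
    tiltedCHval τ p ≤ 0 := by
  unfold tiltedCHval
  simp only [hp, Finset.mul_sum, ← Finset.sum_add_distrib, ← Finset.sum_sub_distrib]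
  refine Finset.sum_nonpos fun l _ => ?_
  have e1 : α l 1 1 = 1 - α l 0 1 := by linarith [hαnorm l 1]
  have e2 : β l 1 1 = 1 - β l 0 1 := by linarith [hβnorm l 1]
  have h := ch_aux (α l 0 0) (α l 0 1) (β l 0 0) (β l 0 1) (hα0 _ _ _) (hα1 _ _ _)
    (hα0 _ _ _) (hα1 _ _ _) (hβ0 _ _ _) (hβ1 _ _ _) (hβ0 _ _ _) (hβ1 _ _ _)
  have h1 := mul_nonneg (hq l) (neg_nonneg.mpr h)
  have h2 := mul_nonneg (hq l) (mul_nonneg (sub_nonneg.mpr hτ)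
    (add_nonneg (hα0 l 0 0) (hβ0 l 0 0)))
  rw [e1, e2]
  linarith
end

section
/- Let p(a,b|x,y) (a,b,x,y ∈ {0,1}) be any nonnegative conditional probabilities satisfying normalization ∑_{a,b} p(a,b|x,y) = 1 for each (x,y), and the no-signaling conditions: ∑_b p(a,b|x,0) = ∑_b p(a,b|x,1) for all a,x, and ∑_a p(a,b|0,y) = ∑_a p(a,b|1,y) for all b,y. Then for every τ ≥ 3/2, the tilted-CH value satisfies S^(τ)(p) ≤ 0. -/
/-- any nonnegative, normalized, no-signaling family of conditional
probabilities satisfies `S^(τ)(p) ≤ 0` for every `τ ≥ 3/2`. -/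
theorem tiltedCH_le_zero_of_noSignaling
    (p : Fin 2 → Fin 2 → Fin 2 → Fin 2 → ℝ)
    (hpos : ∀ a b x y, 0 ≤ p a b x y)
    (hnorm : ∀ x y, ∑ a, ∑ b, p a b x y = 1)
    (hnsA : ∀ a x, ∑ b, p a b x 0 = ∑ b, p a b x 1)
    (hnsB : ∀ b y, ∑ a, p a b 0 y = ∑ a, p a b 1 y)
    (τ : ℝ) (hτ : 3 / 2 ≤ τ) :
    tiltedCHval τ p ≤ 0 := by
  have hA := hnsA 0 0
  have hB := hnsB 0 0
  simp only [Fin.sum_univ_two] at hA hB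
  have key : 0 ≤ (τ - 3 / 2) * (p 0 0 0 1 + p 0 1 0 1 + p 0 0 1 0 + p 1 0 1 0) := by
    have h1 := hpos 0 0 0 1
    have h2 := hpos 0 1 0 1
    have h3 := hpos 0 0 1 0
    have h4 := hpos 1 0 1 0
    exact mul_nonneg (by linarith) (by linarith)
  unfold tiltedCHval
  linarith [hpos 0 1 0 0, hpos 1 0 0 0, hpos 0 1 0 1, hpos 1 0 1 0, hpos 0 0 1 1]
end

section
/- Define the maximal quantum value S_Q^(τ) = sSup of the set of all real numbers S^(τ)(ρ; A₀,A₁,B₀,B₁), ranging over all dimensions d ≥ 1, all density matrices ρ on ℂ^d⊗ℂ^d, and all POVM elements A₀,A₁,B₀,B₁ on ℂ^d. (Theorem 1: no finite-dimensional maximally entangled state violates I^(τ) maximally.) For every τ with 1/2 + 1/√2 ≤ τ < 3/2, every d ≥ 1, and every choice of POVM elements A₀,A₁,B₀,B₁ on ℂ^d, the value attained by the d-dimensional maximally entangled state is strictly below the quantum maximum: S^(τ)(ρ_d⁺; A₀,A₁,B₀,B₁) < S_Q^(τ). -/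
open Matrix
open scoped Kronecker ComplexOrder

/-- `A` is a POVM element on `ℂ^d`: both `A` and `1 - A` are positive semidefinite. -/
def IsPOVMElem {d : ℕ} (A : Matrix (Fin d) (Fin d) ℂ) : Prop :=
  A.PosSemidef ∧ (1 - A).PosSemidef

/-- `ρ` is a density matrix: positive semidefinite with unit trace. -/
def IsDensityMatrix {n : Type*} [Fintype n] [DecidableEq n]
    (ρ : Matrix n n ℂ) : Prop :=
  ρ.PosSemidef ∧ ρ.trace = 1

/-- The tilted-CH Bell value `S^(τ)(ρ; A₀,A₁,B₀,B₁)`. -/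
noncomputable def tiltedCHBell {d : ℕ} (τ : ℝ)
    (ρ : Matrix (Fin d × Fin d) (Fin d × Fin d) ℂ)
    (A0 A1 B0 B1 : Matrix (Fin d) (Fin d) ℂ) : ℝ :=
  (Matrix.trace (ρ * (A0 ⊗ₖ B0 + A0 ⊗ₖ B1 + A1 ⊗ₖ B0 - A1 ⊗ₖ B1))).re
    - τ * (Matrix.trace (ρ * (A0 ⊗ₖ (1 : Matrix (Fin d) (Fin d) ℂ)))).re
    - τ * (Matrix.trace (ρ * ((1 : Matrix (Fin d) (Fin d) ℂ) ⊗ₖ B0))).re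

/-- The `d`-dimensional maximally entangled state `|Ψ⁺_d⟩` as a vector. -/
noncomputable def maxEntVec (d : ℕ) : Fin d × Fin d → ℂ :=
  fun jk => if jk.1 = jk.2 then (1 / Real.sqrt d : ℂ) else 0

/-- The density matrix `ρ_d⁺ = |Ψ⁺_d⟩⟨Ψ⁺_d|`. -/
noncomputable def maxEntState (d : ℕ) :
    Matrix (Fin d × Fin d) (Fin d × Fin d) ℂ :=
  Matrix.vecMulVec (maxEntVec d) (fun jk => starRingEnd ℂ (maxEntVec d jk))

/-- The two-qubit pure state `|ψ^γ⟩ = cos γ |00⟩ + sin γ |11⟩` as a vector. -/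
noncomputable def schmidtVec (γ : ℝ) : Fin 2 × Fin 2 → ℂ :=
  fun jk =>
    if jk = (0, 0) then (Real.cos γ : ℂ)
    else if jk = (1, 1) then (Real.sin γ : ℂ) else 0

/-- The density matrix `ρ_γ = |ψ^γ⟩⟨ψ^γ|`. -/
noncomputable def schmidtState (γ : ℝ) :
    Matrix (Fin 2 × Fin 2) (Fin 2 × Fin 2) ℂ :=
  Matrix.vecMulVec (schmidtVec γ) (fun jk => starRingEnd ℂ (schmidtVec γ jk))

/-- The set of all tilted-CH Bell values attainable in quantum mechanics
(over all dimensions, density matrices and POVM elements); its supremum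
is the maximal quantum value `S_Q^(τ)`. -/
noncomputable def quantumTiltedCHValues (τ : ℝ) : Set ℝ :=
  { s | ∃ d : ℕ, 1 ≤ d ∧
      ∃ (ρ : Matrix (Fin d × Fin d) (Fin d × Fin d) ℂ)
        (A0 A1 B0 B1 : Matrix (Fin d) (Fin d) ℂ),
        IsDensityMatrix ρ ∧ IsPOVMElem A0 ∧ IsPOVMElem A1 ∧
        IsPOVMElem B0 ∧ IsPOVMElem B1 ∧
        s = tiltedCHBell τ ρ A0 A1 B0 B1 }

set_option linter.unusedSimpArgs false

section
variable {R : Type*} [Ring R] [Algebra ℝ R]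

theorem alg_one (P A D E Y w T m : R) (r : ℝ) (hr : r * r = 2) (hP : P * P = P) (hA : A * A = A)
  (hD : D = A * P - P * A * P) (hE : E = P * A - P * A * P) (hY : Y = P - P * A * P)
  (hw : w = (r/4) • P + (1 - r/2) • Y) (hT : T = Y - (1/2:ℝ) • P)
  (hm : m = (2 - 5*r/4) • P - (1 - r/2) • Y) :
  (r+1) • (((r-1) • D - w) * ((r-1) • E - w)) + ((r-1)/2) • (T * T) - (P - A)
   = ((1 - P) + (r-1) • P) * A * ((1 - P) + (r-1) • P) + (r+1) • (((r-1) • D + m) * ((r-1) • E + m))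
    + ((r-1)/2) • (T * T) := by
  have hP' : ∀ x, P * (P * x) = P * x := fun x => by rw [← mul_assoc, hP]
  have hA' : ∀ x, A * (A * x) = A * x := fun x => by rw [← mul_assoc, hA]
  subst hD hE hw hm hT
  subst hY
  simp only [mul_add, add_mul, mul_sub, sub_mul, smul_mul_assoc, mul_smul_comm, mul_assoc, hP, hA, hP', hA', mul_one, one_mul, smul_add, smul_sub]
  match_scalars <;> grind

theorem alg_one' (P A D E Y w T : R) (r : ℝ) (hr : r * r = 2) (hP : P * P = P) (hA : A * A = A)
  (hD : D = A * P - P * A * P) (hE : E = P * A - P * A * P) (hY : Y = P - P * A * P)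
  (hw : w = (r/4) • P + (1 - r/2) • Y) (hT : T = Y - (1/2:ℝ) • P) :
  (r+1) • (((r-1) • D - w) * ((r-1) • E - w)) + ((r-1)/2) • (T * T)
   = (3*r/4) • P - (r/2) • (P * A * P) + (r-1) • (D * E - E * D) - (D * w + w * E) := by
  have hP' : ∀ x, P * (P * x) = P * x := fun x => by rw [← mul_assoc, hP]
  have hA' : ∀ x, A * (A * x) = A * x := fun x => by rw [← mul_assoc, hA]
  subst hD hE hw hT
  subst hY
  simp only [mul_add, add_mul, mul_sub, sub_mul, smul_mul_assoc, mul_smul_comm, mul_assoc, hP, hA, hP', hA', mul_one, one_mul, smul_add, smul_sub]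
  match_scalars <;> grind

theorem alg_two (P A D E W w T m : R) (r : ℝ) (hr : r * r = 2) (hP : P * P = P) (hA : A * A = A)
  (hD : D = A * P - P * A * P) (hE : E = P * A - P * A * P) (hW : W = P * A * P)
  (hw : w = (r/2-1/2) • P + (1 - r/2) • W) (hT : T = W - (1/2:ℝ) • P)
  (hm : m = ((r-1)/2) • P - (1 - r/2) • W) :
  (2+r) • (((1-r/2) • D + w) * ((1-r/2) • E + w)) - (P + A - ((1+r)/2) • (1:R))
   = ((1 - P) + (r-1) • P) * (1 - A) * ((1 - P) + (r-1) • P)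
    + ((r-1)/2) • (((1 - P) - (2*(r-1)) • E) * ((1 - P) - (2*(r-1)) • D))
    + (2+r) • (((1-r/2) • D - m) * ((1-r/2) • E - m))
    + (10*r-14) • (T * T) := by
  have hP' : ∀ x, P * (P * x) = P * x := fun x => by rw [← mul_assoc, hP]
  have hA' : ∀ x, A * (A * x) = A * x := fun x => by rw [← mul_assoc, hA]
  subst hD hE hw hm hT
  subst hW
  simp only [mul_add, add_mul, mul_sub, sub_mul, smul_mul_assoc, mul_smul_comm, mul_assoc, hP, hA, hP', hA', mul_one, one_mul, smul_add, smul_sub]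
  match_scalars <;> grind

theorem alg_two' (P A D E W w : R) (r : ℝ) (hr : r * r = 2) (hP : P * P = P) (hA : A * A = A)
  (hD : D = A * P - P * A * P) (hE : E = P * A - P * A * P) (hW : W = P * A * P)
  (hw : w = (r/2-1/2) • P + (1 - r/2) • W) :
  (2+r) • (((1-r/2) • D + w) * ((1-r/2) • E + w))
   = ((1-r/2)/2) • P + (r/2) • (P * A * P) + (1-r/2) • (D * E - E * D) + (D * w + w * E) := by
  have hP' : ∀ x, P * (P * x) = P * x := fun x => by rw [← mul_assoc, hP]
  have hA' : ∀ x, A * (A * x) = A * x := fun x => by rw [← mul_assoc, hA]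
  subst hD hE hw
  subst hW
  simp only [mul_add, add_mul, mul_sub, sub_mul, smul_mul_assoc, mul_smul_comm, mul_assoc, hP, hA, hP', hA', mul_one, one_mul, smul_add, smul_sub]
  match_scalars <;> grind
end

open scoped MatrixOrder in
theorem trace_mul_nn {n : Type*} [Fintype n] [DecidableEq n] {B C : Matrix n n ℂ}
    (hB : B.PosSemidef) (hC : C.PosSemidef) : 0 ≤ (Matrix.trace (B * C)).re := by
  obtain ⟨L, rfl⟩ := CStarAlgebra.nonneg_iff_eq_star_mul_self.mp hC.nonneg
  rw [Matrix.star_eq_conjTranspose]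
  have h := (hB.mul_mul_conjTranspose_same L).trace_nonneg
  rw [← Matrix.mul_assoc, Matrix.trace_mul_comm, ← Matrix.mul_assoc]
  exact (Complex.le_def.mp h).1

theorem psd_smul {n : Type*} [Fintype n] [DecidableEq n] {C : Matrix n n ℂ} (c : ℝ) (hc : 0 ≤ c)
    (hC : C.PosSemidef) : (c • C).PosSemidef := by
  exact hC.smul hc

theorem trace_re_smul {n : Type*} [Fintype n] (c : ℝ) (C : Matrix n n ℂ) :
    (Matrix.trace (c • C)).re = c * (Matrix.trace C).re := by
  rw [Matrix.trace_smul, Complex.smul_re, smul_eq_mul]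

theorem tr_bound {n : Type*} [Fintype n] [DecidableEq n] {B X Z : Matrix n n ℂ}
    (hB : B.PosSemidef) (hB' : (1 - B).PosSemidef) (hZ : Z.PosSemidef) (hZX : (Z - X).PosSemidef) :
    (Matrix.trace (B * X)).re ≤ (Matrix.trace Z).re := by
  have h1 := trace_mul_nn hB hZX
  have h2 := trace_mul_nn hB' hZ
  simp only [Matrix.mul_sub, Matrix.sub_mul, Matrix.trace_sub, Complex.sub_re, one_mul] at h1 h2
  linarith

theorem herm_sq {n : Type*} [Fintype n] [DecidableEq n] {L M : Matrix n n ℂ} (h : Lᴴ = M) :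
    (L * M).PosSemidef := by
  subst h; exact Matrix.posSemidef_self_mul_conjTranspose L

theorem bound_one {n : Type*} [Fintype n] [DecidableEq n] {P A B : Matrix n n ℂ}
    (hPh : Pᴴ = P) (hAh : Aᴴ = A) (hP : P * P = P) (hA : A * A = A)
    (hB : B.PosSemidef) (hB' : (1 - B).PosSemidef) :
    (Matrix.trace (B * (P - A))).re ≤ (3 * √2 / 4) * (Matrix.trace P).re
      - (√2 / 2) * (Matrix.trace (P * A)).re := by
  have hr : √2 * √2 = 2 := Real.mul_self_sqrt (by norm_num)
  have hr1 : 1 ≤ √2 := by rw [Real.one_le_sqrt]; norm_num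
  generalize √2 = r at hr hr1
  obtain ⟨D, hD⟩ : ∃ D, D = A * P - P * A * P := ⟨_, rfl⟩
  obtain ⟨E, hE⟩ : ∃ D, D = P * A - P * A * P := ⟨_, rfl⟩
  obtain ⟨Y, hY⟩ : ∃ D, D = P - P * A * P := ⟨_, rfl⟩
  obtain ⟨w, hw⟩ : ∃ D, D = (r/4) • P + (1 - r/2) • Y := ⟨_, rfl⟩
  obtain ⟨T, hT⟩ : ∃ D, D = Y - (1/2:ℝ) • P := ⟨_, rfl⟩
  obtain ⟨m, hm⟩ : ∃ D, D = (2 - 5*r/4) • P - (1 - r/2) • Y := ⟨_, rfl⟩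
  have e1 := alg_one P A D E Y w T m r hr hP hA hD hE hY hw hT hm
  have e2 := alg_one' P A D E Y w T r hr hP hA hD hE hY hw hT
  have hDh : Dᴴ = E := by simp [hD, hE, hPh, hAh, Matrix.mul_assoc]
  have hYh : Yᴴ = Y := by simp [hY, hPh, hAh, Matrix.mul_assoc]
  have hwh : wᴴ = w := by simp [hw, hPh, hYh]
  have hTh : Tᴴ = T := by simp [hT, hPh, hYh]
  have hmh : mᴴ = m := by simp [hm, hPh, hYh]
  have pT : (((r-1)/2) • (T * T)).PosSemidef := psd_smul _ (by linarith) (herm_sq hTh)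
  have pA : A.PosSemidef := by rw [← hA]; exact herm_sq hAh
  have hG : ((1 - P) + (r-1) • P)ᴴ = (1 - P) + (r-1) • P := by simp [hPh]
  have pZ : ((r+1) • (((r-1) • D - w) * ((r-1) • E - w)) + ((r-1)/2) • (T * T)).PosSemidef := by
    refine (psd_smul _ (by linarith) (herm_sq ?_)).add pT
    simp [hDh, hwh]
  have pZX : ((r+1) • (((r-1) • D - w) * ((r-1) • E - w)) + ((r-1)/2) • (T * T) - (P - A)).PosSemidef := by
    rw [e1]
    refine (Matrix.PosSemidef.add ?_ (psd_smul _ (by linarith) (herm_sq ?_))).add pT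
    · have := pA.mul_mul_conjTranspose_same ((1 - P) + (r-1) • P)
      rwa [hG] at this
    · simp [hDh, hmh]
  refine (tr_bound hB hB' pZ pZX).trans (le_of_eq ?_)
  rw [e2]
  have hPD : P * D = 0 := by rw [hD, Matrix.mul_sub, ← Matrix.mul_assoc, ← Matrix.mul_assoc, ← Matrix.mul_assoc, hP, sub_self]
  have hEP : E * P = 0 := by rw [hE, Matrix.sub_mul, Matrix.mul_assoc (P * A), hP, sub_self]
  have hwP : w * P = w := by
    simp [hw, hY, Matrix.add_mul, Matrix.sub_mul, hP, Matrix.mul_assoc]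
  have hPw : P * w = w := by
    simp [hw, hY, Matrix.mul_add, Matrix.mul_sub, hP, ← Matrix.mul_assoc]
  have t1 : Matrix.trace (D * w) = 0 := by
    rw [← hwP, ← Matrix.mul_assoc, Matrix.trace_mul_comm, ← Matrix.mul_assoc, hPD]; simp
  have t2 : Matrix.trace (w * E) = 0 := by
    rw [← hPw, Matrix.mul_assoc, Matrix.trace_mul_comm, Matrix.mul_assoc, hEP]; simp
  have t3 : Matrix.trace (P * A * P) = Matrix.trace (P * A) := by
    rw [Matrix.trace_mul_comm, ← Matrix.mul_assoc, hP]
  simp only [Matrix.trace_add, Matrix.trace_sub, Complex.add_re, Complex.sub_re, trace_re_smul, t1, t2, t3,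
    Matrix.trace_mul_comm E D]
  simp

theorem bound_two {n : Type*} [Fintype n] [DecidableEq n] {P A B : Matrix n n ℂ}
    (hPh : Pᴴ = P) (hAh : Aᴴ = A) (hP : P * P = P) (hA : A * A = A)
    (hB : B.PosSemidef) (hB' : (1 - B).PosSemidef) :
    (Matrix.trace (B * (P + A - ((1 + √2)/2) • (1 : Matrix n n ℂ)))).re ≤ ((1-√2/2)/2) * (Matrix.trace P).re
      + (√2 / 2) * (Matrix.trace (P * A)).re := by
  have hr : √2 * √2 = 2 := Real.mul_self_sqrt (by norm_num)
  have hr1 : 1.4 ≤ √2 := by apply Real.le_sqrt_of_sq_le; norm_num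
  generalize √2 = r at hr hr1
  obtain ⟨D, hD⟩ : ∃ D, D = A * P - P * A * P := ⟨_, rfl⟩
  obtain ⟨E, hE⟩ : ∃ D, D = P * A - P * A * P := ⟨_, rfl⟩
  obtain ⟨Y, hY⟩ : ∃ D, D = P * A * P := ⟨_, rfl⟩
  obtain ⟨w, hw⟩ : ∃ D, D = (r/2-1/2) • P + (1 - r/2) • Y := ⟨_, rfl⟩
  obtain ⟨T, hT⟩ : ∃ D, D = Y - (1/2:ℝ) • P := ⟨_, rfl⟩
  obtain ⟨m, hm⟩ : ∃ D, D = ((r-1)/2) • P - (1 - r/2) • Y := ⟨_, rfl⟩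
  have e1 := alg_two P A D E Y w T m r hr hP hA hD hE hY hw hT hm
  have e2 := alg_two' P A D E Y w r hr hP hA hD hE hY hw
  have hDh : Dᴴ = E := by simp [hD, hE, hPh, hAh, Matrix.mul_assoc]
  have hEh : Eᴴ = D := by simp [hD, hE, hPh, hAh, Matrix.mul_assoc]
  have hYh : Yᴴ = Y := by simp [hY, hPh, hAh, Matrix.mul_assoc]
  have hwh : wᴴ = w := by simp [hw, hPh, hYh]
  have hTh : Tᴴ = T := by simp [hT, hPh, hYh]
  have hmh : mᴴ = m := by simp [hm, hPh, hYh]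
  have pA : (1 - A).PosSemidef := by
    have h : (1 - A) * (1 - A) = 1 - A := by
      simp [Matrix.mul_sub, Matrix.sub_mul, hA]
    rw [← h]; exact herm_sq (by simp [hAh])
  have hG : ((1 - P) + (r-1) • P)ᴴ = (1 - P) + (r-1) • P := by simp [hPh]
  have pZ : ((2+r) • (((1-r/2) • D + w) * ((1-r/2) • E + w))).PosSemidef := by
    refine (psd_smul _ (by linarith) (herm_sq ?_))
    simp [hDh, hwh]
  have pZX : ((2+r) • (((1-r/2) • D + w) * ((1-r/2) • E + w)) - (P + A - ((1+r)/2) • (1:Matrix n n ℂ))).PosSemidef := by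
    rw [e1]
    refine (((Matrix.PosSemidef.add ?_ (psd_smul _ (by linarith) (herm_sq ?_)))).add
      (psd_smul _ (by linarith) (herm_sq ?_))).add (psd_smul _ (by linarith) (herm_sq hTh))
    · have := pA.mul_mul_conjTranspose_same ((1 - P) + (r-1) • P)
      rwa [hG] at this
    · simp [hEh, hPh]
    · simp [hDh, hmh]
  refine (tr_bound hB hB' pZ pZX).trans (le_of_eq ?_)
  rw [e2]
  have hPD : P * D = 0 := by rw [hD, Matrix.mul_sub, ← Matrix.mul_assoc, ← Matrix.mul_assoc, ← Matrix.mul_assoc, hP, sub_self]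
  have hEP : E * P = 0 := by rw [hE, Matrix.sub_mul, Matrix.mul_assoc (P * A), hP, sub_self]
  have hwP : w * P = w := by
    simp [hw, hY, Matrix.add_mul, hP, Matrix.mul_assoc]
  have hPw : P * w = w := by
    simp [hw, hY, Matrix.mul_add, hP, ← Matrix.mul_assoc]
  have t1 : Matrix.trace (D * w) = 0 := by
    rw [← hwP, ← Matrix.mul_assoc, Matrix.trace_mul_comm, ← Matrix.mul_assoc, hPD]; simp
  have t2 : Matrix.trace (w * E) = 0 := by
    rw [← hPw, Matrix.mul_assoc, Matrix.trace_mul_comm, Matrix.mul_assoc, hEP]; simp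
  have t3 : Matrix.trace (P * A * P) = Matrix.trace (P * A) := by
    rw [Matrix.trace_mul_comm, ← Matrix.mul_assoc, hP]
  simp only [Matrix.trace_add, Matrix.trace_sub, Complex.add_re, Complex.sub_re, trace_re_smul, t1, t2, t3,
    Matrix.trace_mul_comm E D]
  simp

/-- the optimum of a linear functional over POVM elements is attained at a projection -/
theorem exists_proj {n : Type*} [Fintype n] [DecidableEq n] (M : Matrix n n ℂ) (hM : M.IsHermitian) :
    ∃ P : Matrix n n ℂ, Pᴴ = P ∧ P * P = P ∧ ∀ A : Matrix n n ℂ, A.PosSemidef → (1 - A).PosSemidef →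
      (Matrix.trace (A * M)).re ≤ (Matrix.trace (P * M)).re := by
  obtain ⟨U, hU⟩ : ∃ U : Matrix n n ℂ, U = hM.eigenvectorUnitary := ⟨_, rfl⟩
  have hUU : Uᴴ * U = 1 := by
    rw [hU, ← Matrix.star_eq_conjTranspose]; exact Unitary.coe_star_mul_self _
  have hUU' : U * Uᴴ = 1 := by
    rw [hU, ← Matrix.star_eq_conjTranspose]; exact Unitary.coe_mul_star_self _
  have hs : M = U * Matrix.diagonal (fun i => (hM.eigenvalues i : ℂ)) * Uᴴ := by
    conv_lhs => rw [hM.spectral_theorem]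
    rw [Unitary.conjStarAlgAut_apply, hU]; rfl
  generalize hM.eigenvalues = l at hs
  have key : ∀ A : Matrix n n ℂ, (Matrix.trace (A * M)).re = ∑ i, ((Uᴴ * A * U) i i).re * l i := by
    intro A
    rw [hs, ← Matrix.mul_assoc, Matrix.trace_mul_comm, ← Matrix.mul_assoc, ← Matrix.mul_assoc, Matrix.trace]
    simp [Matrix.mul_diagonal]
  refine ⟨U * Matrix.diagonal (fun i => if 0 < l i then (1:ℂ) else 0) * Uᴴ, ?_, ?_, ?_⟩
  · rw [Matrix.conjTranspose_mul, Matrix.conjTranspose_mul, Matrix.diagonal_conjTranspose,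
      Matrix.conjTranspose_conjTranspose, Matrix.mul_assoc]
    congr 3
    ext i; simp only [Pi.star_apply]; split_ifs <;> simp
  · calc _ = U * Matrix.diagonal (fun i => if 0 < l i then (1:ℂ) else 0) * (Uᴴ * U) *
          Matrix.diagonal (fun i => if 0 < l i then (1:ℂ) else 0) * Uᴴ := by simp only [Matrix.mul_assoc]
      _ = _ := by
        rw [hUU, Matrix.mul_one, Matrix.mul_assoc U, Matrix.diagonal_mul_diagonal]
        congr 3
        ext i; split_ifs <;> simp
  · intro A hA hA'
    rw [key, key]
    apply Finset.sum_le_sum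
    intro i _
    have h1 : 0 ≤ ((Uᴴ * A * U) i i).re :=
      (Complex.le_def.mp ((hA.conjTranspose_mul_mul_same U).diag_nonneg (i := i))).1
    have h2 : 0 ≤ ((Uᴴ * (1 - A) * U) i i).re :=
      (Complex.le_def.mp ((hA'.conjTranspose_mul_mul_same U).diag_nonneg (i := i))).1
    have h3 : Uᴴ * (1 - A) * U = 1 - Uᴴ * A * U := by
      rw [Matrix.mul_sub, Matrix.sub_mul, Matrix.mul_one, hUU]
    have h4 : Uᴴ * (U * Matrix.diagonal (fun i => if 0 < l i then (1:ℂ) else 0) * Uᴴ) * U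
        = Matrix.diagonal (fun i => if 0 < l i then (1:ℂ) else 0) := by
      calc _ = (Uᴴ * U) * Matrix.diagonal (fun i => if 0 < l i then (1:ℂ) else 0) * (Uᴴ * U) := by
            simp only [Matrix.mul_assoc]
        _ = _ := by rw [hUU]; simp
    rw [h3] at h2
    simp only [Matrix.sub_apply, Matrix.one_apply_eq, Complex.sub_re, Complex.one_re] at h2
    rw [h4, Matrix.diagonal_apply_eq]
    split_ifs with h
    · simp; nlinarith
    · simp; push Not at h; nlinarith

/-- the tracial inequality -/
theorem tracial {n : Type*} [Fintype n] [DecidableEq n] {A0 A1 B0 B1 : Matrix n n ℂ}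
    (hA0 : A0.PosSemidef) (hA0' : (1 - A0).PosSemidef) (hA1 : A1.PosSemidef) (hA1' : (1 - A1).PosSemidef)
    (hB0 : B0.PosSemidef) (hB0' : (1 - B0).PosSemidef) (hB1 : B1.PosSemidef) (hB1' : (1 - B1).PosSemidef) :
    (Matrix.trace (A0 * B0)).re + (Matrix.trace (A0 * B1)).re + (Matrix.trace (A1 * B0)).re
      - (Matrix.trace (A1 * B1)).re ≤ ((1 + √2)/2) * ((Matrix.trace A0).re + (Matrix.trace B0).re) := by
  obtain ⟨P, hPh, hP, hPm⟩ := exists_proj (B0 + B1 - ((1 + √2)/2) • (1 : Matrix n n ℂ))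
    (by have h0 := hB0.1.eq; have h1 := hB1.1.eq; simp [Matrix.IsHermitian, h0, h1])
  obtain ⟨A, hAh, hA, hAm⟩ := exists_proj (B0 - B1)
    (by have h0 := hB0.1.eq; have h1 := hB1.1.eq; simp [Matrix.IsHermitian, h0, h1])
  have h1 := hPm A0 hA0 hA0'
  have h2 := hAm A1 hA1 hA1'
  have h3 := bound_one hPh hAh hP hA hB1 hB1'
  have h4 := bound_two hPh hAh hP hA hB0 hB0'
  simp only [Matrix.mul_sub, Matrix.mul_add, Matrix.trace_add, Matrix.trace_sub, Complex.add_re, Complex.sub_re,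
    Matrix.mul_smul, trace_re_smul, Matrix.mul_one, Matrix.trace_mul_comm B0, Matrix.trace_mul_comm B1] at h1 h2 h3 h4
  nlinarith

theorem pair_le_one {n m : Type*} [Fintype n] [DecidableEq n] [Fintype m] [DecidableEq m]
    {ρ : Matrix (n × m) (n × m) ℂ} (hρ : IsDensityMatrix ρ)
    {A : Matrix n n ℂ} {B : Matrix m m ℂ} (hA : A.PosSemidef) (hA' : (1 - A).PosSemidef)
    (hB : B.PosSemidef) (hB' : (1 - B).PosSemidef) :
    0 ≤ (Matrix.trace (ρ * (A ⊗ₖ B))).re ∧ (Matrix.trace (ρ * (A ⊗ₖ B))).re ≤ 1 := by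
  refine ⟨trace_mul_nn hρ.1 (hA.kronecker hB), ?_⟩
  have h : (1 : Matrix (n × m) (n × m) ℂ) - A ⊗ₖ B = (1 - A) ⊗ₖ (1 : Matrix m m ℂ) + A ⊗ₖ (1 - B) := by
    rw [← Matrix.one_kronecker_one]
    ext ⟨i, j⟩ ⟨k, l⟩
    simp only [Matrix.sub_apply, Matrix.add_apply, Matrix.kroneckerMap_apply]
    ring
  have h2 : ((1 : Matrix (n × m) (n × m) ℂ) - A ⊗ₖ B).PosSemidef := by
    rw [h]; exact (hA'.kronecker Matrix.PosSemidef.one).add (hA.kronecker hB')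
  have h3 := trace_mul_nn hρ.1 h2
  rw [Matrix.mul_sub, Matrix.trace_sub, Matrix.mul_one, hρ.2] at h3
  simp at h3
  linarith

theorem bdd (τ : ℝ) (hτ : 0 ≤ τ) : BddAbove (quantumTiltedCHValues τ) := by
  refine ⟨3, ?_⟩
  rintro s ⟨d, hd, ρ, A0, A1, B0, B1, hρ, hA0, hA1, hB0, hB1, rfl⟩
  have h1 := (pair_le_one hρ hA0.1 hA0.2 hB0.1 hB0.2).2
  have h2 := (pair_le_one hρ hA0.1 hA0.2 hB1.1 hB1.2).2
  have h3 := (pair_le_one hρ hA1.1 hA1.2 hB0.1 hB0.2).2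
  have h4 := (pair_le_one hρ hA1.1 hA1.2 hB1.1 hB1.2).1
  have p1 : (1 : Matrix (Fin d) (Fin d) ℂ).PosSemidef := Matrix.PosSemidef.one
  have p0 : (1 - 1 : Matrix (Fin d) (Fin d) ℂ).PosSemidef := by rw [sub_self]; exact Matrix.PosSemidef.zero
  have h5 := mul_nonneg hτ (pair_le_one hρ hA0.1 hA0.2 p1 p0).1
  have h6 := mul_nonneg hτ (pair_le_one hρ p1 p0 hB0.1 hB0.2).1
  unfold tiltedCHBell
  simp only [Matrix.mul_sub, Matrix.mul_add, Matrix.trace_add, Matrix.trace_sub, Complex.add_re, Complex.sub_re]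
  linarith

theorem maxEnt_trace (d : ℕ) (A B : Matrix (Fin d) (Fin d) ℂ) :
    Matrix.trace (maxEntState d * (A ⊗ₖ B)) = ((1 / d : ℝ) : ℂ) * Matrix.trace (A * Bᵀ) := by
  have hs : ((√(d:ℝ) : ℝ) : ℂ)⁻¹ * ((√(d:ℝ) : ℝ) : ℂ)⁻¹ = ((1 / d : ℝ) : ℂ) := by
    rw [← mul_inv, ← Complex.ofReal_mul, Real.mul_self_sqrt (Nat.cast_nonneg d)]; simp
  rw [maxEntState, Matrix.vecMulVec_mul, Matrix.trace_vecMulVec, dotProduct]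
  simp only [Matrix.vecMul, dotProduct, Fintype.sum_prod_type, maxEntVec, Matrix.kroneckerMap_apply]
  simp only [apply_ite (starRingEnd ℂ), map_zero, ite_mul, zero_mul, Finset.sum_ite_eq, Finset.mem_univ, if_true]
  simp only [Matrix.trace, Matrix.diag, Matrix.mul_apply, Matrix.transpose_apply, Finset.mul_sum]
  rw [Finset.sum_comm]
  refine Finset.sum_congr rfl fun i _ => Finset.sum_congr rfl fun j _ => ?_
  rw [← hs]
  simp
  try ring

theorem maxEnt_nonpos (τ : ℝ) (hτ₁ : 1 / 2 + 1 / Real.sqrt 2 ≤ τ)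
    (d : ℕ)
    (A0 A1 B0 B1 : Matrix (Fin d) (Fin d) ℂ)
    (hA0 : IsPOVMElem A0) (hA1 : IsPOVMElem A1)
    (hB0 : IsPOVMElem B0) (hB1 : IsPOVMElem B1) :
    tiltedCHBell τ (maxEntState d) A0 A1 B0 B1 ≤ 0 := by
  have e : 1 / 2 + 1 / √2 = (1 + √2)/2 := by
    have hr : √2 * √2 = 2 := Real.mul_self_sqrt (by norm_num)
    have : √2 ≠ 0 := by positivity
    field_simp; nlinarith
  rw [e] at hτ₁
  have hT : ∀ B : Matrix (Fin d) (Fin d) ℂ, (1 - B).PosSemidef → (1 - Bᵀ).PosSemidef := by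
    intro B h; simpa using h.transpose
  have key := tracial hA0.1 hA0.2 hA1.1 hA1.2 hB0.1.transpose (hT _ hB0.2) hB1.1.transpose (hT _ hB1.2)
  have n1 : 0 ≤ (Matrix.trace A0).re := (Complex.le_def.mp hA0.1.trace_nonneg).1
  have n2 : 0 ≤ (Matrix.trace B0ᵀ).re := (Complex.le_def.mp hB0.1.transpose.trace_nonneg).1
  have hd : (0:ℝ) ≤ 1 / d := by positivity
  unfold tiltedCHBell
  simp only [Matrix.mul_sub, Matrix.mul_add, Matrix.trace_add, Matrix.trace_sub, maxEnt_trace,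
    Complex.add_re, Complex.sub_re, Complex.re_ofReal_mul, Matrix.transpose_one, Matrix.mul_one, Matrix.one_mul]
  have h : (Matrix.trace (A0 * B0ᵀ)).re + (Matrix.trace (A0 * B1ᵀ)).re + (Matrix.trace (A1 * B0ᵀ)).re
      - (Matrix.trace (A1 * B1ᵀ)).re - τ * ((Matrix.trace A0).re + (Matrix.trace B0ᵀ).re) ≤ 0 := by
    have := mul_le_mul_of_nonneg_right hτ₁ (add_nonneg n1 n2)
    linarith
  have := mul_nonpos_of_nonneg_of_nonpos hd h
  linarith

noncomputable def qproj (x y : ℝ) : Matrix (Fin 2) (Fin 2) ℂ :=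
  ((x^2 + y^2)⁻¹ : ℝ) • !![(x:ℂ) * x, x * y; y * x, y * y]

theorem qproj_psd (x y : ℝ) : (qproj x y).PosSemidef := by
  have h := Matrix.posSemidef_vecMulVec_self_star (![(x:ℂ), y])
  have e : Matrix.vecMulVec ![(x:ℂ), y] (star ![(x:ℂ), y]) = !![(x:ℂ) * x, x * y; y * x, y * y] := by
    ext i j; fin_cases i <;> fin_cases j <;> simp [Matrix.vecMulVec_apply]
  rw [e] at h
  exact psd_smul _ (by positivity) h

theorem qproj_povm (x y : ℝ) (h : 0 < x^2 + y^2) : IsPOVMElem (qproj x y) := by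
  refine ⟨qproj_psd x y, ?_⟩
  have hc : (x:ℂ)^2 + (y:ℂ)^2 ≠ 0 := by exact_mod_cast h.ne'
  have hc' : (y:ℂ)^2 + (x:ℂ)^2 ≠ 0 := by rwa [add_comm]
  have e : 1 - qproj x y = qproj (-y) x := by
    ext i j; fin_cases i <;> fin_cases j <;> simp [qproj] <;> field_simp <;> ring
  rw [e]; exact qproj_psd _ _

noncomputable def qstate (a : ℝ) : Matrix (Fin 2 × Fin 2) (Fin 2 × Fin 2) ℂ :=
  ((1 + a^2)⁻¹ : ℝ) • Matrix.vecMulVec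
    (fun jk => if jk = (0, 0) then (1:ℂ) else if jk = (1, 1) then (a : ℂ) else 0)
    (star (fun jk => if jk = (0, 0) then (1:ℂ) else if jk = (1, 1) then (a : ℂ) else 0))

theorem qstate_density (a : ℝ) : IsDensityMatrix (qstate a) := by
  have hc : (1:ℂ) + (a:ℂ)^2 ≠ 0 := by exact_mod_cast (by positivity : (0:ℝ) < 1 + a^2).ne'
  refine ⟨psd_smul _ (by positivity) (Matrix.posSemidef_vecMulVec_self_star _), ?_⟩
  simp [qstate, Matrix.trace, Fintype.sum_prod_type, Matrix.vecMulVec_apply]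
  field_simp

theorem qstate_trace (a : ℝ) (A B : Matrix (Fin 2) (Fin 2) ℂ) :
    Matrix.trace (qstate a * (A ⊗ₖ B)) = ((1 + a^2)⁻¹ : ℝ) * (A 0 0 * B 0 0 + a * A 0 1 * B 0 1
      + a * A 1 0 * B 1 0 + a^2 * A 1 1 * B 1 1) := by
  simp [qstate, Matrix.trace, Fintype.sum_prod_type, Matrix.vecMulVec_apply, Matrix.mul_apply]
  ring

theorem exists_pos_value (τ : ℝ) (h1 : 1 ≤ τ) (hτ₂ : τ < 3 / 2) : ∃ s ∈ quantumTiltedCHValues τ, 0 < s := by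
  obtain ⟨a, ha⟩ : ∃ a, a = (3 - 2 * τ) / 10 := ⟨_, rfl⟩
  have ha0 : 0 < a := by rw [ha]; linarith
  have ha1 : a ≤ 1/10 := by rw [ha]; linarith
  refine ⟨_, ⟨2, by norm_num, qstate (a^2), qproj 0 1, qproj a 1, qproj (a^3) 1, qproj (-a) 1,
    qstate_density _, qproj_povm _ _ (by positivity), qproj_povm _ _ (by positivity),
    qproj_povm _ _ (by positivity), qproj_povm _ _ (by positivity), rfl⟩, ?_⟩
  have hval : tiltedCHBell τ (qstate (a^2)) (qproj 0 1) (qproj a 1) (qproj (a^3) 1) (qproj (-a) 1)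
     = a^4 / (1 + a^4) * ((2 + a^2 - τ * (1 + a^2)) / (1 + a^6) + 1 / (1 + a^2) - τ) := by
    unfold tiltedCHBell
    simp only [Matrix.mul_sub, Matrix.mul_add, Matrix.trace_add, Matrix.trace_sub, qstate_trace]
    have e : ∀ x : ℝ, qproj x 1 = !![((x * x / (x^2+1) : ℝ) : ℂ), ((x / (x^2+1) : ℝ) : ℂ);
        ((x / (x^2+1) : ℝ) : ℂ), ((1 / (x^2+1) : ℝ) : ℂ)] := by
      intro x
      ext i j; fin_cases i <;> fin_cases j <;> simp [qproj] <;> ring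
    simp only [e]
    simp only [Matrix.of_apply, Matrix.cons_val', Matrix.cons_val_zero, Matrix.cons_val_one, Matrix.one_apply_eq,
      Matrix.cons_val_fin_one, Matrix.one_apply_ne (show (0 : Fin 2) ≠ 1 by decide), Matrix.one_apply_ne (show (1 : Fin 2) ≠ 0 by decide)]
    norm_cast
    have q1 : 1 + a^4 ≠ 0 := by positivity
    have q2 : 1 + a^2 ≠ 0 := by positivity
    have q3 : 1 + a^6 ≠ 0 := by positivity
    field_simp
    ring
  rw [hval]
  apply mul_pos (by positivity)
  have hpos : 0 < (3 - 2*τ) + a^2 * (3 - 3*τ) + a^4*(1-τ) + a^6*(1-τ) - τ * a^8 := by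
    have b2 : a^2 ≤ a := by nlinarith
    have b4 : a^4 ≤ a := by nlinarith [pow_le_pow_of_le_one ha0.le (by linarith : a ≤ 1) (show 1 ≤ 4 by norm_num)]
    have b6 : a^6 ≤ a := by nlinarith [pow_le_pow_of_le_one ha0.le (by linarith : a ≤ 1) (show 1 ≤ 6 by norm_num)]
    have b8 : a^8 ≤ a := by nlinarith [pow_le_pow_of_le_one ha0.le (by linarith : a ≤ 1) (show 1 ≤ 8 by norm_num)]
    have c2 : 0 ≤ a^2 := by positivity
    have c4 : 0 ≤ a^4 := by positivity
    have c6 : 0 ≤ a^6 := by positivity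
    have c8 : 0 ≤ a^8 := by positivity
    nlinarith
  have : (2 + a^2 - τ * (1 + a^2)) / (1 + a^6) + 1 / (1 + a^2) - τ =
     ((3 - 2*τ) + a^2 * (3 - 3*τ) + a^4*(1-τ) + a^6*(1-τ) - τ * a^8) / ((1 + a^6) * (1 + a^2)) := by
    field_simp; ring
  rw [this]
  positivity

/-- Theorem 1: for `1/2 + 1/√2 ≤ τ < 3/2`, no finite-dimensional
maximally entangled state attains the maximal quantum violation of `I^(τ)`. -/
theorem maxEnt_lt_quantum_sup
    (τ : ℝ) (hτ₁ : 1 / 2 + 1 / Real.sqrt 2 ≤ τ) (hτ₂ : τ < 3 / 2)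
    (d : ℕ) (hd : 1 ≤ d)
    (A0 A1 B0 B1 : Matrix (Fin d) (Fin d) ℂ)
    (hA0 : IsPOVMElem A0) (hA1 : IsPOVMElem A1)
    (hB0 : IsPOVMElem B0) (hB1 : IsPOVMElem B1) :
    tiltedCHBell τ (maxEntState d) A0 A1 B0 B1 < sSup (quantumTiltedCHValues τ) := by
  have h1 : 1 ≤ τ := by
    have : (1:ℝ)/2 ≤ 1 / √2 := by
      apply one_div_le_one_div_of_le (by positivity)
      rw [Real.sqrt_le_left (by norm_num)]; norm_num
    linarith
  obtain ⟨s, hs, hs0⟩ := exists_pos_value τ h1 hτ₂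
  exact (maxEnt_nonpos τ hτ₁ d A0 A1 B0 B1 hA0 hA1 hB0 hB1).trans_lt
    (hs0.trans_le (le_csSup (bdd τ (by linarith)) hs))
end

section
/- Let d ≥ 1, let ρ be a density matrix on ℂ^d⊗ℂ^d, and let A₀,A₁,B₀,B₁ be POVM elements on ℂ^d such that all four outcome-0 marginal probabilities equal one half: Re tr(ρ·(A_x⊗1)) = 1/2 for x = 0,1 and Re tr(ρ·(1⊗B_y)) = 1/2 for y = 0,1. Then for every τ ∈ ℝ, S^(τ)(ρ; A₀,A₁,B₀,B₁) ≤ 1/√2 − 1/2 − (τ − 1). In particular the value is ≤ 0 whenever τ ≥ 1/2 + 1/√2. -/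
open Matrix
open scoped Kronecker ComplexOrder

lemma chsh_abs {R : Type*} [Ring R] [Algebra ℝ R] (f : R →ₗ[ℝ] ℝ) (X0 X1 Y0 Y1 : R)
    (s : ℝ) (hs : s * s = 1 / 2)
    (c00 : Y0 * X0 = X0 * Y0) (c01 : Y1 * X0 = X0 * Y1)
    (c10 : Y0 * X1 = X1 * Y0) (c11 : Y1 * X1 = X1 * Y1)
    (hU : 0 ≤ f ((X0 - s • (Y0 + Y1)) * (X0 - s • (Y0 + Y1))))
    (hV : 0 ≤ f ((X1 - s • (Y0 - Y1)) * (X1 - s • (Y0 - Y1))))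
    (h0 : f (X0 * X0) ≤ 1) (h1 : f (X1 * X1) ≤ 1)
    (k0 : f (Y0 * Y0) ≤ 1) (k1 : f (Y1 * Y1) ≤ 1) :
    s * (f (X0 * Y0) + f (X0 * Y1) + f (X1 * Y0) - f (X1 * Y1)) ≤ 2 := by
  simp only [sub_mul, mul_sub, add_mul, mul_add, smul_mul_assoc, mul_smul_comm, smul_add, smul_sub,
    map_add, map_sub, map_smul, smul_eq_mul, c00, c01, c10, c11, smul_smul, hs] at hU hV
  linarith

open scoped MatrixOrder in
lemma trace_nonneg_aux {n : Type*} [Fintype n] [DecidableEq n] {ρ M : Matrix n n ℂ}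
    (hρ : ρ.PosSemidef) (hM : M.PosSemidef) : 0 ≤ (Matrix.trace (ρ * M)).re := by
  obtain ⟨C, rfl⟩ := CStarAlgebra.nonneg_iff_eq_star_mul_self.mp hρ.nonneg
  rw [Matrix.star_eq_conjTranspose] at *
  rw [Matrix.mul_assoc, Matrix.trace_mul_comm]
  have := (hM.mul_mul_conjTranspose_same C).trace_nonneg
  exact (Complex.le_def.mp this).1

/-- The functional `M ↦ Re tr (ρ M)`. -/
noncomputable def expv {n : Type*} [Fintype n] (ρ : Matrix n n ℂ) : Matrix n n ℂ →ₗ[ℝ] ℝ where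
  toFun M := (Matrix.trace (ρ * M)).re
  map_add' := by intro x y; simp [Matrix.mul_add]
  map_smul' := by intro x y; simp

lemma expv_sq {n : Type*} [Fintype n] [DecidableEq n] {ρ M : Matrix n n ℂ}
    (hρ : ρ.PosSemidef) (hM : M.IsHermitian) : 0 ≤ expv ρ (M * M) := by
  refine trace_nonneg_aux hρ ?_
  have := Matrix.posSemidef_conjTranspose_mul_self M
  rwa [hM.eq] at this

lemma expv_le_one {n : Type*} [Fintype n] [DecidableEq n] {ρ P : Matrix n n ℂ}
    (hρ : ρ.PosSemidef) (ht : ρ.trace = 1) (hP : P.PosSemidef) (hP' : (1 - P).PosSemidef) :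
    expv ρ ((P + P - 1) * (P + P - 1)) ≤ 1 := by
  have h1 : (P * (1 - P) * P).PosSemidef := by
    have := hP'.mul_mul_conjTranspose_same P
    rwa [hP.isHermitian.eq] at this
  have h2 : ((1 - P) * P * (1 - P)).PosSemidef := by
    have := hP.mul_mul_conjTranspose_same (1 - P)
    rwa [hP'.isHermitian.eq] at this
  have h3 : 0 ≤ expv ρ (P * (1 - P) * P + (1 - P) * P * (1 - P)) :=
    trace_nonneg_aux hρ (h1.add h2)
  have e : (P + P - 1) * (P + P - 1) =
      1 - (4 : ℝ) • (P * (1 - P) * P + (1 - P) * P * (1 - P)) := by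
    have : (4 : ℝ) • (P * (1 - P) * P + (1 - P) * P * (1 - P)) =
      4 * (P * (1 - P) * P + (1 - P) * P * (1 - P)) := by
      rw [Algebra.smul_def, map_ofNat]
    rw [this]; noncomm_ring
  have e1 : expv ρ 1 = 1 := by simp [expv, ht]
  rw [e, map_sub, map_smul, e1, smul_eq_mul]
  linarith

lemma herm_comb {n : Type*} [Fintype n] {X Y : Matrix n n ℂ} (s : ℝ)
    (hX : X.IsHermitian) (hY : Y.IsHermitian) : (X - s • Y).IsHermitian := by
  refine hX.sub ?_
  unfold Matrix.IsHermitian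
  rw [Matrix.conjTranspose_smul, hY.eq]; simp

/-- if all four outcome-0 marginal probabilities equal 1/2, then
`S^(τ) ≤ 1/√2 − 1/2 − (τ − 1)` for every real `τ`; in particular `S^(τ) ≤ 0`
whenever `τ ≥ 1/2 + 1/√2`. -/
theorem tiltedCHBell_le_of_uniform_marginals
    (d : ℕ) (hd : 1 ≤ d)
    (ρ : Matrix (Fin d × Fin d) (Fin d × Fin d) ℂ)
    (A0 A1 B0 B1 : Matrix (Fin d) (Fin d) ℂ)
    (hρ : IsDensityMatrix ρ)
    (hA0 : IsPOVMElem A0) (hA1 : IsPOVMElem A1)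
    (hB0 : IsPOVMElem B0) (hB1 : IsPOVMElem B1)
    (hmA0 : (Matrix.trace (ρ * (A0 ⊗ₖ (1 : Matrix (Fin d) (Fin d) ℂ)))).re = 1 / 2)
    (hmA1 : (Matrix.trace (ρ * (A1 ⊗ₖ (1 : Matrix (Fin d) (Fin d) ℂ)))).re = 1 / 2)
    (hmB0 : (Matrix.trace (ρ * ((1 : Matrix (Fin d) (Fin d) ℂ) ⊗ₖ B0))).re = 1 / 2)
    (hmB1 : (Matrix.trace (ρ * ((1 : Matrix (Fin d) (Fin d) ℂ) ⊗ₖ B1))).re = 1 / 2) :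
    ∀ τ : ℝ,
      tiltedCHBell τ ρ A0 A1 B0 B1 ≤ 1 / Real.sqrt 2 - 1 / 2 - (τ - 1) ∧
      (1 / 2 + 1 / Real.sqrt 2 ≤ τ → tiltedCHBell τ ρ A0 A1 B0 B1 ≤ 0) := by
  have hS : (Matrix.trace (ρ * (A0 ⊗ₖ B0 + A0 ⊗ₖ B1 + A1 ⊗ₖ B0 - A1 ⊗ₖ B1))).re
      ≤ 1 / Real.sqrt 2 + 1 / 2 := by
    obtain ⟨hρ, ht⟩ := hρ
    have one : (1 : Matrix (Fin d) (Fin d) ℂ).PosSemidef := Matrix.PosSemidef.one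
    have pA : ∀ A : Matrix (Fin d) (Fin d) ℂ, IsPOVMElem A →
        (A ⊗ₖ (1 : Matrix (Fin d) (Fin d) ℂ)).PosSemidef ∧
        (1 - A ⊗ₖ (1 : Matrix (Fin d) (Fin d) ℂ)).PosSemidef := by
      intro A h
      refine ⟨h.1.kronecker one, ?_⟩
      have := h.2.kronecker one
      have e : (1 - A) ⊗ₖ (1 : Matrix (Fin d) (Fin d) ℂ) =
          1 - A ⊗ₖ (1 : Matrix (Fin d) (Fin d) ℂ) := by
        exact eq_sub_of_add_eq (by rw [← Matrix.add_kronecker, sub_add_cancel, Matrix.one_kronecker_one])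
      rwa [e] at this
    have pB : ∀ A : Matrix (Fin d) (Fin d) ℂ, IsPOVMElem A →
        ((1 : Matrix (Fin d) (Fin d) ℂ) ⊗ₖ A).PosSemidef ∧
        (1 - (1 : Matrix (Fin d) (Fin d) ℂ) ⊗ₖ A).PosSemidef := by
      intro A h
      refine ⟨one.kronecker h.1, ?_⟩
      have := one.kronecker h.2
      have e : (1 : Matrix (Fin d) (Fin d) ℂ) ⊗ₖ (1 - A) =
          1 - (1 : Matrix (Fin d) (Fin d) ℂ) ⊗ₖ A := by
        exact eq_sub_of_add_eq (by rw [← Matrix.kronecker_add, sub_add_cancel, Matrix.one_kronecker_one])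
      rwa [e] at this
    have c1 : ∀ A B : Matrix (Fin d) (Fin d) ℂ,
        (A ⊗ₖ (1 : Matrix (Fin d) (Fin d) ℂ)) * ((1 : Matrix (Fin d) (Fin d) ℂ) ⊗ₖ B)
          = A ⊗ₖ B := by
      intro A B; rw [← Matrix.mul_kronecker_mul]; simp
    have c2 : ∀ A B : Matrix (Fin d) (Fin d) ℂ,
        ((1 : Matrix (Fin d) (Fin d) ℂ) ⊗ₖ B) * (A ⊗ₖ (1 : Matrix (Fin d) (Fin d) ℂ))
          = A ⊗ₖ B := by
      intro A B; rw [← Matrix.mul_kronecker_mul]; simp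
    have ea : ∀ A B : Matrix (Fin d) (Fin d) ℂ,
        expv ρ (A ⊗ₖ (1 : Matrix (Fin d) (Fin d) ℂ)) = 1 / 2 →
        expv ρ ((1 : Matrix (Fin d) (Fin d) ℂ) ⊗ₖ B) = 1 / 2 →
        expv ρ ((A ⊗ₖ (1 : Matrix (Fin d) (Fin d) ℂ) + A ⊗ₖ (1 : Matrix (Fin d) (Fin d) ℂ) - 1) *
          ((1 : Matrix (Fin d) (Fin d) ℂ) ⊗ₖ B + (1 : Matrix (Fin d) (Fin d) ℂ) ⊗ₖ B - 1))
          = 4 * expv ρ (A ⊗ₖ B) - 1 := by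
      intro A B hA hB
      have e1 : expv ρ 1 = 1 := by simp [expv, ht]
      simp only [sub_mul, mul_sub, add_mul, mul_add, mul_one, one_mul, c1, map_add, map_sub,
        hA, hB, e1]
      ring
    have cc : ∀ A B : Matrix (Fin d) (Fin d) ℂ,
        ((1 : Matrix (Fin d) (Fin d) ℂ) ⊗ₖ B + (1 : Matrix (Fin d) (Fin d) ℂ) ⊗ₖ B - 1) *
        (A ⊗ₖ (1 : Matrix (Fin d) (Fin d) ℂ) + A ⊗ₖ (1 : Matrix (Fin d) (Fin d) ℂ) - 1) =
        (A ⊗ₖ (1 : Matrix (Fin d) (Fin d) ℂ) + A ⊗ₖ (1 : Matrix (Fin d) (Fin d) ℂ) - 1) *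
        ((1 : Matrix (Fin d) (Fin d) ℂ) ⊗ₖ B + (1 : Matrix (Fin d) (Fin d) ℂ) ⊗ₖ B - 1) := by
      intro A B
      simp only [sub_mul, mul_sub, add_mul, mul_add, mul_one, one_mul, c1, c2]
      abel
    have hh : ∀ P : Matrix (Fin d × Fin d) (Fin d × Fin d) ℂ, P.PosSemidef →
        (P + P - 1).IsHermitian := fun P h =>
      (h.isHermitian.add h.isHermitian).sub Matrix.isHermitian_one
    have h2 : Real.sqrt 2 * Real.sqrt 2 = 2 := Real.mul_self_sqrt (by norm_num)
    have h2p : 0 < Real.sqrt 2 := by positivity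
    have hs : (1 / Real.sqrt 2) * (1 / Real.sqrt 2) = 1 / 2 := by
      rw [div_mul_div_comm, h2]; norm_num
    have key := chsh_abs (expv ρ) _ _ _ _ (1 / Real.sqrt 2) hs
      (cc A0 B0) (cc A0 B1) (cc A1 B0) (cc A1 B1)
      (expv_sq hρ (herm_comb _ (hh _ (pA A0 hA0).1) ((hh _ (pB B0 hB0).1).add (hh _ (pB B1 hB1).1))))
      (expv_sq hρ (herm_comb _ (hh _ (pA A1 hA1).1) ((hh _ (pB B0 hB0).1).sub (hh _ (pB B1 hB1).1))))
      (expv_le_one hρ ht (pA A0 hA0).1 (pA A0 hA0).2)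
      (expv_le_one hρ ht (pA A1 hA1).1 (pA A1 hA1).2)
      (expv_le_one hρ ht (pB B0 hB0).1 (pB B0 hB0).2)
      (expv_le_one hρ ht (pB B1 hB1).1 (pB B1 hB1).2)
    rw [ea A0 B0 hmA0 hmB0, ea A0 B1 hmA0 hmB1, ea A1 B0 hmA1 hmB0, ea A1 B1 hmA1 hmB1] at key
    change expv ρ (A0 ⊗ₖ B0 + A0 ⊗ₖ B1 + A1 ⊗ₖ B0 - A1 ⊗ₖ B1) ≤ _
    rw [map_sub, map_add, map_add]
    have hp : 0 < 1 / Real.sqrt 2 := by positivity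
    generalize 1 / Real.sqrt 2 = s at *
    nlinarith
  intro τ
  have hb : tiltedCHBell τ ρ A0 A1 B0 B1 ≤ 1 / Real.sqrt 2 - 1 / 2 - (τ - 1) := by
    unfold tiltedCHBell
    rw [hmA0, hmB0]
    linarith
  exact ⟨hb, fun h => by linarith⟩
end

section
/- Let γ ∈ [0, π/4], τ ≥ 1, and let A₀,A₁,B₀,B₁ be arbitrary POVM elements on ℂ². Then the tilted-CH Bell value of the pure two-qubit state |ψ^γ⟩ is bounded as S^(τ)(ρ_γ; A₀,A₁,B₀,B₁) ≤ max{0, 2(1−τ)·sin²γ + (√(1 + sin²(2γ)) − 1)/2}. -/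
open Matrix
open scoped Kronecker ComplexOrder

/-- Effects: diagonal `p`, `q`, off-diagonal `x + i y`. -/
structure TEff where
  p : ℝ
  q : ℝ
  x : ℝ
  y : ℝ

noncomputable def TEff.ok (A : TEff) : Prop :=
  0 ≤ A.p ∧ 0 ≤ A.q ∧ A.p ≤ 1 ∧ A.q ≤ 1 ∧ A.x ^ 2 + A.y ^ 2 ≤ A.p * A.q ∧
    A.x ^ 2 + A.y ^ 2 ≤ (1 - A.p) * (1 - A.q)

noncomputable def TEff.compl (A : TEff) : TEff := ⟨1 - A.p, 1 - A.q, -A.x, -A.y⟩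

noncomputable def TEff.unit : TEff := ⟨1, 1, 0, 0⟩

noncomputable def TEff.zero : TEff := ⟨0, 0, 0, 0⟩

noncomputable def TEff.proj (x y z : ℝ) : TEff := ⟨(1 + z) / 2, (1 - z) / 2, x / 2, y / 2⟩

noncomputable def TEff.ev (C D : ℝ) (A B : TEff) : ℝ :=
  C ^ 2 * (A.p * B.p) + D ^ 2 * (A.q * B.q) + 2 * (C * D) * (A.x * B.x - A.y * B.y)

noncomputable def TEff.S (C D τ : ℝ) (A0 A1 B0 B1 : TEff) : ℝ :=
  TEff.ev C D A0 B0 + TEff.ev C D A0 B1 + TEff.ev C D A1 B0 - TEff.ev C D A1 B1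
    - τ * TEff.ev C D A0 TEff.unit - τ * TEff.ev C D TEff.unit B0

theorem TEff.ok.compl {A : TEff} (h : A.ok) : A.compl.ok := by
  obtain ⟨h1, h2, h3, h4, h5, h6⟩ := h
  refine ⟨?_, ?_, ?_, ?_, ?_, ?_⟩ <;> simp only [TEff.compl] <;> nlinarith

theorem TEff.ok_unit : TEff.unit.ok := by
  refine ⟨?_, ?_, ?_, ?_, ?_, ?_⟩ <;> norm_num [TEff.unit]

theorem TEff.ok_proj {x y z : ℝ} (h : x ^ 2 + y ^ 2 + z ^ 2 = 1) : (TEff.proj x y z).ok := by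
  refine ⟨?_, ?_, ?_, ?_, ?_, ?_⟩ <;> simp only [TEff.proj] <;>
    nlinarith [sq_nonneg x, sq_nonneg y, sq_nonneg (z - 1), sq_nonneg (z + 1)]

theorem TEff.ev_nonneg (C D : ℝ) {A B : TEff} (hA : A.ok) (hB : B.ok) :
    0 ≤ TEff.ev C D A B := by
  obtain ⟨h1, h2, h3, h4, h5, h6⟩ := hA
  obtain ⟨k1, k2, k3, k4, k5, k6⟩ := hB
  set R := A.x * B.x - A.y * B.y with hR
  have hR2 : R ^ 2 ≤ (A.p * B.p) * (A.q * B.q) := by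
    have e1 : R ^ 2 ≤ (A.x ^ 2 + A.y ^ 2) * (B.x ^ 2 + B.y ^ 2) := by
      rw [hR]; nlinarith [sq_nonneg (A.x * B.y + A.y * B.x)]
    have e2 : (A.x ^ 2 + A.y ^ 2) * (B.x ^ 2 + B.y ^ 2) ≤ (A.p * A.q) * (B.p * B.q) :=
      mul_le_mul h5 k5 (by positivity) (by positivity)
    nlinarith
  have hP : 0 ≤ C ^ 2 * (A.p * B.p) := by positivity
  have hQ : 0 ≤ D ^ 2 * (A.q * B.q) := by positivity
  have h : (2 * (C * D) * R) ^ 2 ≤ (C ^ 2 * (A.p * B.p) + D ^ 2 * (A.q * B.q)) ^ 2 := by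
    have := mul_le_mul_of_nonneg_left hR2 (by positivity : 0 ≤ 4 * (C * D) ^ 2)
    nlinarith [sq_nonneg (C ^ 2 * (A.p * B.p) - D ^ 2 * (A.q * B.q))]
  have h' := (abs_le_of_sq_le_sq' h (by positivity)).1
  unfold TEff.ev
  linarith

/-- affine functions are bounded by their values at extreme points -/
theorem TEff.extreme (k kp kq kx ky M : ℝ) (A : TEff) (hA : A.ok)
    (h0 : k ≤ M) (h1 : k + kp + kq ≤ M)
    (hp : ∀ x y z : ℝ, x ^ 2 + y ^ 2 + z ^ 2 = 1 →
      k + kp * ((1 + z) / 2) + kq * ((1 - z) / 2) + kx * (x / 2) + ky * (y / 2) ≤ M) :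
    k + kp * A.p + kq * A.q + kx * A.x + ky * A.y ≤ M := by
  obtain ⟨a1, a2, a3, a4, a5, a6⟩ := hA
  obtain ⟨p, q, x, y⟩ := A
  simp only at *
  set r := √(((p - q) / 2) ^ 2 + x ^ 2 + y ^ 2) with hr
  have hr0 : 0 ≤ r := Real.sqrt_nonneg _
  have hr2 : r ^ 2 = ((p - q) / 2) ^ 2 + x ^ 2 + y ^ 2 := Real.sq_sqrt (by positivity)
  have b1 : r ≤ (p + q) / 2 := (abs_le_of_sq_le_sq' (by nlinarith) (by linarith)).2
  have b2 : r ≤ 1 - (p + q) / 2 := (abs_le_of_sq_le_sq' (by nlinarith) (by linarith)).2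
  rcases hr0.eq_or_lt with h | h
  · rw [← h] at hr2
    have ex : x = 0 := by nlinarith [sq_nonneg ((p - q) / 2), sq_nonneg x, sq_nonneg y]
    have ey : y = 0 := by nlinarith [sq_nonneg ((p - q) / 2), sq_nonneg x, sq_nonneg y]
    have ez : p = q := by nlinarith [sq_nonneg ((p - q) / 2), sq_nonneg x, sq_nonneg y]
    subst ex ey ez
    nlinarith
  · have key := hp (x / r) (y / r) ((p - q) / 2 / r) (by field_simp; nlinarith)
    have e : k + kp * p + kq * q + kx * x + ky * y =
        2 * r * (k + kp * ((1 + (p - q) / 2 / r) / 2) + kq * ((1 - (p - q) / 2 / r) / 2)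
          + kx * (x / r / 2) + ky * (y / r / 2))
        + ((p + q) / 2 - r) * (k + kp + kq) + (1 - (p + q) / 2 - r) * k := by
      field_simp; ring
    rw [e]
    have := mul_le_mul_of_nonneg_left key (by linarith : 0 ≤ 2 * r)
    have := mul_le_mul_of_nonneg_left h1 (by linarith : 0 ≤ (p + q) / 2 - r)
    have := mul_le_mul_of_nonneg_left h0 (by linarith : 0 ≤ 1 - (p + q) / 2 - r)
    linarith

theorem TEff.chsh_aux (s p q a b U V : ℝ) (hs0 : 0 ≤ s) (hs1 : s ≤ 1) (hp : 0 ≤ p) (hq : 0 ≤ q)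
    (hpq : p + q = 4) (ha : a ^ 2 ≤ p) (hb : b ^ 2 ≤ q) (hg : q * a ^ 2 + p * b ^ 2 ≤ p * q)
    (hU : U ^ 2 ≤ s ^ 2 * (p - a ^ 2) + a ^ 2) (hV : V ^ 2 ≤ s ^ 2 * (q - b ^ 2) + b ^ 2) :
    (U + V) ^ 2 ≤ 4 * (1 + s ^ 2) := by
  have hs2 : s ^ 2 ≤ 1 := by nlinarith
  have g1 : 0 ≤ (1 - s ^ 2) * (p - a ^ 2) := mul_nonneg (by linarith) (by linarith)
  have g2 : 0 ≤ (1 - s ^ 2) * (q - b ^ 2) := mul_nonneg (by linarith) (by linarith)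
  rcases hp.eq_or_lt with h | h
  · have : U = 0 := by
      have : U ^ 2 ≤ 0 := by nlinarith
      exact pow_eq_zero_iff (two_ne_zero) |>.1 (le_antisymm this (sq_nonneg U))
    rw [this]; nlinarith [sq_nonneg s]
  rcases hq.eq_or_lt with h' | h'
  · have : V = 0 := by
      have : V ^ 2 ≤ 0 := by nlinarith
      exact pow_eq_zero_iff (two_ne_zero) |>.1 (le_antisymm this (sq_nonneg V))
    rw [this]; nlinarith [sq_nonneg s]
  have m1 := mul_le_mul_of_nonneg_left hU hq
  have m2 := mul_le_mul_of_nonneg_left hV hp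
  have m3 := mul_le_mul_of_nonneg_left hg (by linarith : 0 ≤ 1 - s ^ 2)
  have m4 : q * U ^ 2 + p * V ^ 2 ≤ p * q * (1 + s ^ 2) := by nlinarith
  have m5 : p * q * (U + V) ^ 2 = (p + q) * (q * U ^ 2 + p * V ^ 2) - (q * U - p * V) ^ 2 := by
    ring
  rw [hpq] at m5
  have : p * q * (U + V) ^ 2 ≤ p * q * (4 * (1 + s ^ 2)) := by nlinarith [sq_nonneg (q * U - p * V)]
  exact le_of_mul_le_mul_left this (by positivity)

theorem TEff.cauchy (s x y z a b c : ℝ) (h : x ^ 2 + y ^ 2 + z ^ 2 = 1) :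
    (z * c + s * (x * a - y * b)) ^ 2 ≤ s ^ 2 * ((a ^ 2 + b ^ 2 + c ^ 2) - c ^ 2) + c ^ 2 := by
  have : s ^ 2 * ((a ^ 2 + b ^ 2 + c ^ 2) - c ^ 2) + c ^ 2
      = (x ^ 2 + y ^ 2 + z ^ 2) * (s ^ 2 * (a ^ 2 + b ^ 2) + c ^ 2) := by rw [h]; ring
  rw [this]
  nlinarith [sq_nonneg (x * (s * b) + y * (s * a)), sq_nonneg (x * c - z * (s * a)),
    sq_nonneg (y * c + z * (s * b))]

theorem TEff.chsh (s x0 y0 z0 x1 y1 z1 a0 b0 c0 a1 b1 c1 : ℝ) (hs0 : 0 ≤ s) (hs1 : s ≤ 1)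
    (h0 : x0 ^ 2 + y0 ^ 2 + z0 ^ 2 = 1) (h1 : x1 ^ 2 + y1 ^ 2 + z1 ^ 2 = 1)
    (k0 : a0 ^ 2 + b0 ^ 2 + c0 ^ 2 = 1) (k1 : a1 ^ 2 + b1 ^ 2 + c1 ^ 2 = 1) :
    (z0 * (c0 + c1) + s * (x0 * (a0 + a1) - y0 * (b0 + b1)))
     + (z1 * (c0 - c1) + s * (x1 * (a0 - a1) - y1 * (b0 - b1))) ≤ 2 * √(1 + s ^ 2) := by
  have hE := TEff.chsh_aux s _ _ (c0 + c1) (c0 - c1) _ _ hs0 hs1 (by positivity) (by positivity)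
    (by linarith) (by nlinarith [sq_nonneg (a0 + a1), sq_nonneg (b0 + b1)])
    (by nlinarith [sq_nonneg (a0 - a1), sq_nonneg (b0 - b1)])
    (by
      have ho : (a0 + a1) * (a0 - a1) + (b0 + b1) * (b0 - b1) + (c0 + c1) * (c0 - c1) = 0 := by
        linarith
      generalize a0 + a1 = u1 at *
      generalize a0 - a1 = v1 at *
      generalize b0 + b1 = u2 at *
      generalize b0 - b1 = v2 at *
      generalize c0 + c1 = u3 at *
      generalize c0 - c1 = v3 at *
      have : (u1 ^ 2 + u2 ^ 2 + u3 ^ 2) * (v1 ^ 2 + v2 ^ 2 + v3 ^ 2)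
          - ((v1 ^ 2 + v2 ^ 2 + v3 ^ 2) * u3 ^ 2 + (u1 ^ 2 + u2 ^ 2 + u3 ^ 2) * v3 ^ 2)
          = (u1 * v2 - u2 * v1) ^ 2 := by
        linear_combination (u1 * v1 + u2 * v2 + u3 * v3 - 2 * u3 * v3) * ho
      nlinarith [sq_nonneg (u1 * v2 - u2 * v1)])
    (TEff.cauchy s x0 y0 z0 (a0 + a1) (b0 + b1) (c0 + c1) h0)
    (TEff.cauchy s x1 y1 z1 (a0 - a1) (b0 - b1) (c0 - c1) h1)
  have hq : 0 ≤ √(1 + s ^ 2) := Real.sqrt_nonneg _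
  have hq2 : √(1 + s ^ 2) ^ 2 = 1 + s ^ 2 := Real.sq_sqrt (by positivity)
  exact (abs_le_of_sq_le_sq' (by nlinarith) (by positivity)).2

theorem TEff.proj_bound (C D τ : ℝ) (hD : 0 ≤ D) (hDC : D ≤ C) (hCD : C ^ 2 + D ^ 2 = 1)
    (hτ : 1 ≤ τ) (x0 y0 z0 x1 y1 z1 a0 b0 c0 a1 b1 c1 : ℝ)
    (h0 : x0 ^ 2 + y0 ^ 2 + z0 ^ 2 = 1) (h1 : x1 ^ 2 + y1 ^ 2 + z1 ^ 2 = 1)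
    (k0 : a0 ^ 2 + b0 ^ 2 + c0 ^ 2 = 1) (k1 : a1 ^ 2 + b1 ^ 2 + c1 ^ 2 = 1) :
    TEff.S C D τ (.proj x0 y0 z0) (.proj x1 y1 z1) (.proj a0 b0 c0) (.proj a1 b1 c1) ≤
      2 * (1 - τ) * D ^ 2 + (√(1 + (2 * D * C) ^ 2) - 1) / 2 := by
  have H := TEff.chsh (2 * D * C) x0 y0 z0 x1 y1 z1 a0 b0 c0 a1 b1 c1
    (mul_nonneg (by linarith) (by linarith)) (by nlinarith [sq_nonneg (C - D)]) h0 h1 k0 k1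
  have hCC : 0 ≤ C ^ 2 - D ^ 2 := by nlinarith
  have hz : -1 ≤ z0 := by nlinarith [sq_nonneg x0, sq_nonneg y0]
  have hc : -1 ≤ c0 := by nlinarith [sq_nonneg a0, sq_nonneg b0]
  have t1 : 0 ≤ (τ - 1) * ((C ^ 2 - D ^ 2) * (z0 + 1)) :=
    mul_nonneg (by linarith) (mul_nonneg hCC (by linarith))
  have t2 : 0 ≤ (τ - 1) * ((C ^ 2 - D ^ 2) * (c0 + 1)) :=
    mul_nonneg (by linarith) (mul_nonneg hCC (by linarith))
  have e : C ^ 2 = 1 - D ^ 2 := by linarith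
  simp only [TEff.S, TEff.ev, TEff.proj, TEff.unit]
  rw [e] at t1 t2 ⊢
  linarith

theorem TEff.main (C D τ : ℝ) (hD : 0 ≤ D) (hDC : D ≤ C) (hCD : C ^ 2 + D ^ 2 = 1)
    (hτ : 1 ≤ τ) (A0 A1 B0 B1 : TEff) (hA0 : A0.ok) (hA1 : A1.ok) (hB0 : B0.ok) (hB1 : B1.ok) :
    TEff.S C D τ A0 A1 B0 B1 ≤
      max 0 (2 * (1 - τ) * D ^ 2 + (√(1 + (2 * D * C) ^ 2) - 1) / 2) := by
  set M := max 0 (2 * (1 - τ) * D ^ 2 + (√(1 + (2 * D * C) ^ 2) - 1) / 2) with hM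
  have hM0 : 0 ≤ M := le_max_left _ _
  have ev0 : ∀ A B : TEff, A.ok → B.ok → 0 ≤ TEff.ev C D A B :=
    fun A B hA hB => TEff.ev_nonneg C D hA hB
  have tt : ∀ A B : TEff, A.ok → B.ok → 0 ≤ (τ - 1) * TEff.ev C D A B :=
    fun A B hA hB => mul_nonneg (by linarith) (ev0 A B hA hB)
  have u := TEff.ok_unit
  -- reduce A0
  have r0 : ∀ A0 A1 B0 B1 : TEff, A0.ok → A1.ok → B0.ok → B1.ok →
      (∀ x y z : ℝ, x ^ 2 + y ^ 2 + z ^ 2 = 1 → TEff.S C D τ (.proj x y z) A1 B0 B1 ≤ M) →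
      TEff.S C D τ A0 A1 B0 B1 ≤ M := by
    intro A0 A1 B0 B1 hA0 hA1 hB0 hB1 h
    have w1 := ev0 _ _ hA1 hB1
    have w2 := ev0 _ _ hA1.compl hB0
    have w3 := ev0 _ _ hA1.compl hB1.compl
    have w4 := ev0 _ _ hA1 hB0.compl
    have w5 := tt _ _ u hB0
    have w6 := tt _ _ u u
    have := TEff.extreme (TEff.S C D τ .zero A1 B0 B1)
      (C ^ 2 * (B0.p + B1.p - τ)) (D ^ 2 * (B0.q + B1.q - τ))
      (2 * (C * D) * (B0.x + B1.x)) (-(2 * (C * D) * (B0.y + B1.y))) M A0 hA0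
      (by
        simp only [TEff.S, TEff.ev, TEff.unit, TEff.zero, TEff.compl] at *
        linarith)
      (by
        simp only [TEff.S, TEff.ev, TEff.unit, TEff.zero, TEff.compl] at *
        linarith)
      (by
        intro x y z hx
        have := h x y z hx
        simp only [TEff.S, TEff.ev, TEff.unit, TEff.zero, TEff.proj] at *
        linarith)
    simp only [TEff.S, TEff.ev, TEff.unit, TEff.zero] at *
    linarith
  have r1 : ∀ A0 A1 B0 B1 : TEff, A0.ok → A1.ok → B0.ok → B1.ok →
      (∀ x y z : ℝ, x ^ 2 + y ^ 2 + z ^ 2 = 1 → TEff.S C D τ A0 (.proj x y z) B0 B1 ≤ M) →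
      TEff.S C D τ A0 A1 B0 B1 ≤ M := by
    intro A0 A1 B0 B1 hA0 hA1 hB0 hB1 h
    have w1 := ev0 _ _ hA0 hB1.compl
    have w2 := ev0 _ _ hA0.compl hB0
    have w3 := ev0 _ _ hA0 hB0.compl
    have w4 := ev0 _ _ hA0.compl hB1
    have w5 := tt _ _ u hB0
    have w6 := tt _ _ hA0 u
    have := TEff.extreme (TEff.S C D τ A0 .zero B0 B1)
      (C ^ 2 * (B0.p - B1.p)) (D ^ 2 * (B0.q - B1.q))
      (2 * (C * D) * (B0.x - B1.x)) (-(2 * (C * D) * (B0.y - B1.y))) M A1 hA1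
      (by
        simp only [TEff.S, TEff.ev, TEff.unit, TEff.zero, TEff.compl] at *
        linarith)
      (by
        simp only [TEff.S, TEff.ev, TEff.unit, TEff.zero, TEff.compl] at *
        linarith)
      (by
        intro x y z hx
        have := h x y z hx
        simp only [TEff.S, TEff.ev, TEff.unit, TEff.zero, TEff.proj] at *
        linarith)
    simp only [TEff.S, TEff.ev, TEff.unit, TEff.zero] at *
    linarith
  have sw : ∀ A0 A1 B0 B1 : TEff, TEff.S C D τ A0 A1 B0 B1 = TEff.S C D τ B0 B1 A0 A1 := by
    intro A0 A1 B0 B1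
    simp only [TEff.S, TEff.ev, TEff.unit]
    ring
  refine r0 _ _ _ _ hA0 hA1 hB0 hB1 fun x0 y0 z0 h0 => ?_
  have hP0 := TEff.ok_proj h0
  refine r1 _ _ _ _ hP0 hA1 hB0 hB1 fun x1 y1 z1 h1 => ?_
  have hP1 := TEff.ok_proj h1
  rw [sw]
  refine r0 _ _ _ _ hB0 hB1 hP0 hP1 fun a0 b0 c0 k0 => ?_
  refine r1 _ _ _ _ (TEff.ok_proj k0) hB1 hP0 hP1 fun a1 b1 c1 k1 => ?_
  rw [sw]
  exact (TEff.proj_bound C D τ hD hDC hCD hτ _ _ _ _ _ _ _ _ _ _ _ _ h0 h1 k0 k1).trans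
    (le_max_right _ _)

noncomputable def TEff.ofMat (A : Matrix (Fin 2) (Fin 2) ℂ) : TEff :=
  ⟨(A 0 0).re, (A 1 1).re, (A 0 1).re, (A 0 1).im⟩

theorem TEff.psd_entries {A : Matrix (Fin 2) (Fin 2) ℂ} (h : A.PosSemidef) :
    0 ≤ (A 0 0).re ∧ (A 0 0).im = 0 ∧ 0 ≤ (A 1 1).re ∧ (A 1 1).im = 0 ∧
    (A 1 0).re = (A 0 1).re ∧ (A 1 0).im = -(A 0 1).im ∧
    (A 0 1).re ^ 2 + (A 0 1).im ^ 2 ≤ (A 0 0).re * (A 1 1).re := by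
  have d0 := Complex.le_def.1 (h.diag_nonneg (i := 0))
  have d1 := Complex.le_def.1 (h.diag_nonneg (i := 1))
  have dd := Complex.le_def.1 h.det_nonneg
  have hh := h.isHermitian.apply 1 0
  have hr := congrArg Complex.re hh
  have hi := congrArg Complex.im hh
  rw [Matrix.det_fin_two] at dd
  simp at d0 d1 dd hr hi
  obtain ⟨d0, d0'⟩ := d0
  obtain ⟨d1, d1'⟩ := d1
  refine ⟨d0, d0'.symm, d1, d1'.symm, hr.symm, by linarith, ?_⟩
  have := dd.1
  rw [← d0', ← hr, show (A 1 0).im = -(A 0 1).im by linarith] at this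
  nlinarith

theorem TEff.ofMat_ok {A : Matrix (Fin 2) (Fin 2) ℂ} (h : IsPOVMElem A) : (TEff.ofMat A).ok := by
  obtain ⟨a1, a2, a3, a4, a5, a6, a7⟩ := TEff.psd_entries h.1
  obtain ⟨b1, b2, b3, b4, b5, b6, b7⟩ := TEff.psd_entries h.2
  simp at b1 b3 b7
  exact ⟨a1, a3, b1, b3, a7, b7⟩

theorem TEff.trace_eq (γ : ℝ) {A B : Matrix (Fin 2) (Fin 2) ℂ} (hA : A.PosSemidef)
    (hB : B.PosSemidef) :
    (Matrix.trace (schmidtState γ * (A ⊗ₖ B))).re =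
      TEff.ev (Real.cos γ) (Real.sin γ) (TEff.ofMat A) (TEff.ofMat B) := by
  obtain ⟨a1, a2, a3, a4, a5, a6, a7⟩ := TEff.psd_entries hA
  obtain ⟨b1, b2, b3, b4, b5, b6, b7⟩ := TEff.psd_entries hB
  have : Matrix.trace (schmidtState γ * (A ⊗ₖ B)) =
      (Real.cos γ : ℂ) * Real.cos γ * (A 0 0 * B 0 0) + Real.sin γ * Real.sin γ * (A 1 1 * B 1 1)
      + Real.cos γ * Real.sin γ * (A 1 0 * B 1 0) + Real.cos γ * Real.sin γ * (A 0 1 * B 0 1) := by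
    simp [Matrix.trace, Matrix.mul_apply, Fintype.sum_prod_type, schmidtState, schmidtVec,
      Matrix.vecMulVec_apply, -Complex.ofReal_cos, -Complex.ofReal_sin]
    ring
  rw [this]
  simp [-Complex.ofReal_cos, -Complex.ofReal_sin, TEff.ev, TEff.ofMat, a2, a4, a5, a6, b2, b4, b5, b6]
  ring

/-- for `γ ∈ [0, π/4]`, `τ ≥ 1`, and arbitrary POVM elements, the
tilted-CH Bell value of `|ψ^γ⟩` is bounded by
`max {0, 2(1−τ)sin²γ + (√(1 + sin²2γ) − 1)/2}`. -/
theorem tiltedCHBell_schmidt_upper_bound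
    (γ : ℝ) (hγ₀ : 0 ≤ γ) (hγ₁ : γ ≤ Real.pi / 4)
    (τ : ℝ) (hτ : 1 ≤ τ)
    (A0 A1 B0 B1 : Matrix (Fin 2) (Fin 2) ℂ)
    (hA0 : IsPOVMElem A0) (hA1 : IsPOVMElem A1)
    (hB0 : IsPOVMElem B0) (hB1 : IsPOVMElem B1) :
    tiltedCHBell τ (schmidtState γ) A0 A1 B0 B1 ≤
      max 0 (2 * (1 - τ) * Real.sin γ ^ 2 +
        (Real.sqrt (1 + Real.sin (2 * γ) ^ 2) - 1) / 2) := by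
  have hpi := Real.pi_pos
  have e1 : TEff.ofMat 1 = TEff.unit := by simp [TEff.ofMat, TEff.unit]
  have hS : tiltedCHBell τ (schmidtState γ) A0 A1 B0 B1 =
      TEff.S (Real.cos γ) (Real.sin γ) τ (TEff.ofMat A0) (TEff.ofMat A1) (TEff.ofMat B0)
        (TEff.ofMat B1) := by
    unfold tiltedCHBell TEff.S
    rw [Matrix.mul_sub, Matrix.mul_add, Matrix.mul_add, Matrix.trace_sub, Matrix.trace_add,
      Matrix.trace_add, Complex.sub_re, Complex.add_re, Complex.add_re,
      TEff.trace_eq γ hA0.1 hB0.1, TEff.trace_eq γ hA0.1 hB1.1, TEff.trace_eq γ hA1.1 hB0.1,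
      TEff.trace_eq γ hA1.1 hB1.1, TEff.trace_eq γ hA0.1 Matrix.PosSemidef.one,
      TEff.trace_eq γ Matrix.PosSemidef.one hB0.1, e1]
  rw [hS, Real.sin_two_mul]
  refine TEff.main _ _ τ (Real.sin_nonneg_of_nonneg_of_le_pi hγ₀ (by linarith)) ?_
    (Real.cos_sq_add_sin_sq γ) hτ _ _ _ _ (TEff.ofMat_ok hA0) (TEff.ofMat_ok hA1)
    (TEff.ofMat_ok hB0) (TEff.ofMat_ok hB1)
  rw [← Real.sin_pi_div_two_sub]
  exact Real.sin_le_sin_of_le_of_le_pi_div_two (by linarith) (by linarith) (by linarith)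
end

section
/- Let γ ∈ [0, π/4] and let A₀,A₁,B₀,B₁ be arbitrary POVM elements on ℂ². If the observed Clauser–Horne value S := S^(1)(ρ_γ; A₀,A₁,B₀,B₁) is nonnegative, then the concurrence C_γ = sin(2γ) of |ψ^γ⟩ is bounded from below as sin(2γ) ≥ √((2S + 1)² − 1). -/
open Matrix
open scoped Kronecker ComplexOrder

noncomputable def chE (c C a x y z b x' y' z' : ℝ) : ℝ :=
  a * b + c * (a * z' + b * z) + z * z' + C * (x * x' - y * y')

def chGood (a x y z : ℝ) : Prop :=
  -1 ≤ a ∧ a ≤ 1 ∧ x ^ 2 + y ^ 2 + z ^ 2 ≤ (1 - a) ^ 2 ∧ x ^ 2 + y ^ 2 + z ^ 2 ≤ (1 + a) ^ 2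

lemma chGood_neg {a x y z : ℝ} (h : chGood a x y z) : chGood (-a) (-x) (-y) (-z) := by
  obtain ⟨h1, h2, h3, h4⟩ := h
  exact ⟨by linarith, by linarith, by nlinarith, by nlinarith⟩

lemma chGood_sphere {x y z : ℝ} (h : x ^ 2 + y ^ 2 + z ^ 2 = 1) : chGood 0 x y z :=
  ⟨by norm_num, by norm_num, by linarith, by linarith⟩

lemma ch_pos_aux (k s X Y w : ℝ) (hX : 0 ≤ X) (hY : 0 ≤ Y) (hw : w ^ 2 ≤ X * Y) :
    0 ≤ k ^ 2 * X + s ^ 2 * Y + 2 * k * s * w := by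
  have h0 : 0 ≤ k ^ 2 * X + s ^ 2 * Y := by positivity
  have h1 : (2 * k * s * w) ^ 2 ≤ (k ^ 2 * X + s ^ 2 * Y) ^ 2 := by
    have : (k * s) ^ 2 * w ^ 2 ≤ (k * s) ^ 2 * (X * Y) := by gcongr
    nlinarith [sq_nonneg (k ^ 2 * X - s ^ 2 * Y)]
  have := (abs_le_of_sq_le_sq' h1 h0).1
  linarith

lemma ch_pos (k s a x y z b x' y' z' : ℝ) (hks : k ^ 2 + s ^ 2 = 1)
    (hA : chGood a x y z) (hB : chGood b x' y' z') :
    0 ≤ chE (k ^ 2 - s ^ 2) (2 * k * s) (1 + a) x y z (1 + b) x' y' z' := by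
  obtain ⟨a1, a2, a3, a4⟩ := hA
  obtain ⟨b1, b2, b3, b4⟩ := hB
  have az := abs_le_of_sq_le_sq' (show z ^ 2 ≤ (1 + a) ^ 2 by nlinarith [sq_nonneg x, sq_nonneg y])
    (by linarith)
  have bz := abs_le_of_sq_le_sq'
    (show z' ^ 2 ≤ (1 + b) ^ 2 by nlinarith [sq_nonneg x', sq_nonneg y']) (by linarith)
  have p1 : 0 ≤ 1 + a + z := by linarith [az.1]
  have p2 : 0 ≤ 1 + a - z := by linarith [az.2]
  have q1 : 0 ≤ 1 + b + z' := by linarith [bz.1]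
  have q2 : 0 ≤ 1 + b - z' := by linarith [bz.2]
  have hp : x ^ 2 + y ^ 2 ≤ (1 + a + z) * (1 + a - z) := by nlinarith
  have hq : x' ^ 2 + y' ^ 2 ≤ (1 + b + z') * (1 + b - z') := by nlinarith
  have hw : (x * x' - y * y') ^ 2 ≤
      ((1 + a + z) * (1 + b + z')) * ((1 + a - z) * (1 + b - z')) := by
    have h1 : (x * x' - y * y') ^ 2 ≤ (x ^ 2 + y ^ 2) * (x' ^ 2 + y' ^ 2) := by
      nlinarith [sq_nonneg (x * y' + y * x')]
    have h2 : (x ^ 2 + y ^ 2) * (x' ^ 2 + y' ^ 2) ≤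
      ((1 + a + z) * (1 + a - z)) * ((1 + b + z') * (1 + b - z')) := by
      apply mul_le_mul hp hq (by positivity) (by positivity)
    linarith
  have := ch_pos_aux k s _ _ _ (mul_nonneg p1 q1) (mul_nonneg p2 q2) hw
  have e : chE (k ^ 2 - s ^ 2) (2 * k * s) (1 + a) x y z (1 + b) x' y' z' =
    k ^ 2 * ((1 + a + z) * (1 + b + z')) + s ^ 2 * ((1 + a - z) * (1 + b - z'))
      + 2 * k * s * (x * x' - y * y') := by
    unfold chE
    linear_combination (-(1 + a) * (1 + b) - z * z') * hks
  linarith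

lemma ch_conv (f : ℝ → ℝ → ℝ → ℝ → ℝ) (M l0 lx ly lz K : ℝ)
    (hf : ∀ a x y z, f a x y z = l0 * a + lx * x + ly * y + lz * z + K)
    (h1 : f 1 0 0 0 ≤ M) (h2 : f (-1) 0 0 0 ≤ M)
    (h3 : ∀ x y z, x ^ 2 + y ^ 2 + z ^ 2 = 1 → f 0 x y z ≤ M)
    (a x y z : ℝ) (h : chGood a x y z) : f a x y z ≤ M := by
  have ball : ∀ x y z, x ^ 2 + y ^ 2 + z ^ 2 ≤ 1 → f 0 x y z ≤ M := by
    intro x y z h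
    have h0 : 0 ≤ 1 - x ^ 2 - y ^ 2 := by nlinarith [sq_nonneg z]
    have hs := Real.sq_sqrt h0
    have hn := Real.sqrt_nonneg (1 - x ^ 2 - y ^ 2)
    set w := Real.sqrt (1 - x ^ 2 - y ^ 2)
    have hz := abs_le_of_sq_le_sq' (show z ^ 2 ≤ w ^ 2 by linarith) hn
    have e1 := h3 x y w (by linarith)
    have e2 := h3 x y (-w) (by nlinarith)
    rw [hf] at e1 e2 ⊢
    rcases le_total 0 lz with hl | hl <;> nlinarith [hz.1, hz.2]
  obtain ⟨a1, a2, a3, a4⟩ := h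
  have key : ∀ e : ℝ, f e 0 0 0 ≤ M → ∀ p t : ℝ, 0 ≤ p → 0 ≤ t → p + t = 1 → a = e * p →
      x ^ 2 + y ^ 2 + z ^ 2 ≤ t ^ 2 → f a x y z ≤ M := by
    intro e he p t hp ht hpt hae hr
    rcases ht.eq_or_lt with ht | ht
    · subst ht
      have hx : x = 0 := by nlinarith [sq_nonneg x, sq_nonneg y, sq_nonneg z]
      have hy : y = 0 := by nlinarith [sq_nonneg x, sq_nonneg y, sq_nonneg z]
      have hz : z = 0 := by nlinarith [sq_nonneg x, sq_nonneg y, sq_nonneg z]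
      have : p = 1 := by linarith
      subst hx hy hz this
      rw [hae]; simpa using he
    · have hb := ball (x / t) (y / t) (z / t) (by
        rw [div_pow, div_pow, div_pow, ← add_div, ← add_div]
        exact div_le_one_of_le₀ hr (by positivity))
      rw [hf] at hb he ⊢
      have hb' := mul_le_mul_of_nonneg_left hb ht.le
      have he' := mul_le_mul_of_nonneg_left he hp
      have : t * (l0 * 0 + lx * (x / t) + ly * (y / t) + lz * (z / t) + K) =
        lx * x + ly * y + lz * z + t * K := by field_simp; ring
      rw [this] at hb'
      have hpe : p = 1 - t := by linarith
      subst hpe hae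
      nlinarith
  rcases le_total 0 a with ha | ha
  · exact key 1 h1 a (1 - a) ha (by linarith) (by ring) (by ring) a3
  · exact key (-1) h2 (-a) (1 + a) (by linarith) (by linarith) (by ring) (by ring) a4

noncomputable def chF (c C a0 x0 y0 z0 a1 x1 y1 z1 b0 u0 v0 w0 b1 u1 v1 w1 : ℝ) : ℝ :=
  chE c C a0 x0 y0 z0 b0 u0 v0 w0 + chE c C a0 x0 y0 z0 b1 u1 v1 w1
   + chE c C a1 x1 y1 z1 b0 u0 v0 w0 - chE c C a1 x1 y1 z1 b1 u1 v1 w1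

/-- Cauchy-Schwarz with a unit vector. -/
lemma ch_cs (x y z p q r : ℝ) (h : x ^ 2 + y ^ 2 + z ^ 2 = 1) :
    x * p + y * q + z * r ≤ Real.sqrt (p ^ 2 + q ^ 2 + r ^ 2) := by
  apply Real.le_sqrt_of_sq_le
  have : p ^ 2 + q ^ 2 + r ^ 2 = (x ^ 2 + y ^ 2 + z ^ 2) * (p ^ 2 + q ^ 2 + r ^ 2) := by
    rw [h]; ring
  rw [this]
  nlinarith [sq_nonneg (x * q - y * p), sq_nonneg (x * r - z * p), sq_nonneg (y * r - z * q)]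

lemma ch_two (P Q N D e e' G : ℝ) (hN : 0 ≤ N) (hD : 0 ≤ D) (hG : 0 ≤ G) (hG1 : G ≤ 1)
    (hND : N + D = 4) (he : 0 ≤ e) (he' : 0 ≤ e') (heN : e ≤ N) (heD : e' ≤ D)
    (hB : e * D + e' * N ≤ N * D)
    (hP : P ^ 2 = G * N + (1 - G) * e) (hQ : Q ^ 2 = G * D + (1 - G) * e') :
    (P + Q) ^ 2 ≤ 4 * (1 + G) := by
  rcases hN.eq_or_lt with h | hN
  · have : P = 0 := by
      have : e = 0 := by linarith
      have : P ^ 2 = 0 := by rw [hP, ← h, this]; ring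
      exact pow_eq_zero_iff (two_ne_zero) |>.1 this
    subst this
    nlinarith
  rcases hD.eq_or_lt with h | hD
  · have : Q = 0 := by
      have : e' = 0 := by linarith
      have : Q ^ 2 = 0 := by rw [hQ, ← h, this]; ring
      exact pow_eq_zero_iff (two_ne_zero) |>.1 this
    subst this
    nlinarith
  have hm : N * D * (P + Q) ^ 2 ≤ N * D * (4 * (1 + G)) := by
    have h1 : N * D * (P + Q) ^ 2 ≤ (N + D) * (D * P ^ 2 + N * Q ^ 2) := by
      nlinarith [sq_nonneg (D * P - N * Q)]
    have h2 : D * P ^ 2 + N * Q ^ 2 ≤ N * D * (1 + G) := by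
      rw [hP, hQ]
      nlinarith [mul_le_mul_of_nonneg_left hB (sub_nonneg.2 hG1)]
    rw [hND] at h1
    linarith
  exact le_of_mul_le_mul_left hm (by positivity)

lemma ch_sphere (c C x0 y0 z0 x1 y1 z1 u0 v0 w0 u1 v1 w1 : ℝ) (hC : C ^ 2 ≤ 1)
    (ha0 : x0 ^ 2 + y0 ^ 2 + z0 ^ 2 = 1) (ha1 : x1 ^ 2 + y1 ^ 2 + z1 ^ 2 = 1)
    (hb0 : u0 ^ 2 + v0 ^ 2 + w0 ^ 2 = 1) (hb1 : u1 ^ 2 + v1 ^ 2 + w1 ^ 2 = 1) :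
    chF c C 0 x0 y0 z0 0 x1 y1 z1 0 u0 v0 w0 0 u1 v1 w1 ≤ 2 * Real.sqrt (1 + C ^ 2) := by
  have k1 := ch_cs x0 y0 z0 (C * (u0 + u1)) (-(C * (v0 + v1))) (w0 + w1) ha0
  have k2 := ch_cs x1 y1 z1 (C * (u0 - u1)) (-(C * (v0 - v1))) (w0 - w1) ha1
  set P := Real.sqrt ((C * (u0 + u1)) ^ 2 + (-(C * (v0 + v1))) ^ 2 + (w0 + w1) ^ 2) with hP
  set Q := Real.sqrt ((C * (u0 - u1)) ^ 2 + (-(C * (v0 - v1))) ^ 2 + (w0 - w1) ^ 2) with hQ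
  have hP2 : P ^ 2 = _ := Real.sq_sqrt (by positivity)
  have hQ2 : Q ^ 2 = _ := Real.sq_sqrt (by positivity)
  have ho : (u0 + u1) * (u0 - u1) + (v0 + v1) * (v0 - v1) + (w0 + w1) * (w0 - w1) = 0 := by
    linear_combination hb0 - hb1
  have hn : (u0 + u1) ^ 2 + (v0 + v1) ^ 2 + (w0 + w1) ^ 2 +
      ((u0 - u1) ^ 2 + (v0 - v1) ^ 2 + (w0 - w1) ^ 2) = 4 := by
    linear_combination 2 * hb0 + 2 * hb1
  have hE : chF c C 0 x0 y0 z0 0 x1 y1 z1 0 u0 v0 w0 0 u1 v1 w1 ≤ P + Q := by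
    refine le_trans (le_of_eq ?_) (add_le_add k1 k2)
    unfold chF chE; ring
  generalize u0 + u1 = su at *
  generalize v0 + v1 = sv at *
  generalize w0 + w1 = sw at *
  generalize u0 - u1 = du at *
  generalize v0 - v1 = dv at *
  generalize w0 - w1 = dw at *
  have := ch_two P Q (su ^ 2 + sv ^ 2 + sw ^ 2) (du ^ 2 + dv ^ 2 + dw ^ 2) (sw ^ 2) (dw ^ 2) (C ^ 2)
    (by positivity) (by positivity) (by positivity) hC hn (by positivity) (by positivity)
    (by nlinarith [sq_nonneg su, sq_nonneg sv]) (by nlinarith [sq_nonneg du, sq_nonneg dv])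
    (by
      have : (su ^ 2 + sv ^ 2 + sw ^ 2) * (du ^ 2 + dv ^ 2 + dw ^ 2) =
        sw ^ 2 * (du ^ 2 + dv ^ 2 + dw ^ 2) + dw ^ 2 * (su ^ 2 + sv ^ 2 + sw ^ 2)
          + (su * dv - sv * du) ^ 2 := by
        linear_combination (su * du + sv * dv - sw * dw) * ho
      nlinarith [sq_nonneg (su * dv - sv * du)])
    (by rw [hP2]; ring) (by rw [hQ2]; ring)
  have h2 : P + Q ≤ Real.sqrt (4 * (1 + C ^ 2)) := Real.le_sqrt_of_sq_le this
  have h3 : Real.sqrt (4 * (1 + C ^ 2)) = 2 * Real.sqrt (1 + C ^ 2) := by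
    rw [Real.sqrt_mul (by norm_num), show (4 : ℝ) = 2 ^ 2 by norm_num,
      Real.sqrt_sq (by norm_num)]
  linarith

lemma ch_main (k s a0 x0 y0 z0 a1 x1 y1 z1 b0 u0 v0 w0 b1 u1 v1 w1 : ℝ)
    (hks : k ^ 2 + s ^ 2 = 1)
    (hA0 : chGood a0 x0 y0 z0) (hA1 : chGood a1 x1 y1 z1)
    (hB0 : chGood b0 u0 v0 w0) (hB1 : chGood b1 u1 v1 w1) :
    chF (k ^ 2 - s ^ 2) (2 * k * s) a0 x0 y0 z0 a1 x1 y1 z1 b0 u0 v0 w0 b1 u1 v1 w1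
      ≤ 2 * Real.sqrt (1 + (2 * k * s) ^ 2) := by
  have hM : 2 ≤ 2 * Real.sqrt (1 + (2 * k * s) ^ 2) := by
    have : 1 ≤ Real.sqrt (1 + (2 * k * s) ^ 2) :=
      Real.one_le_sqrt.2 (by nlinarith [sq_nonneg (2 * k * s)])
    linarith
  have hC : (2 * k * s) ^ 2 ≤ 1 := by
    have : (2 * k * s) ^ 2 = 1 - (k ^ 2 - s ^ 2) ^ 2 := by
      linear_combination (k ^ 2 + s ^ 2 + 1) * hks
    nlinarith [sq_nonneg (k ^ 2 - s ^ 2)]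
  have pos := fun a x y z b x' y' z' hA hB => ch_pos k s a x y z b x' y' z' hks hA hB
  have sph := fun x0 y0 z0 x1 y1 z1 u0 v0 w0 u1 v1 w1 =>
    ch_sphere (k ^ 2 - s ^ 2) (2 * k * s) x0 y0 z0 x1 y1 z1 u0 v0 w0 u1 v1 w1 hC
  generalize 2 * Real.sqrt (1 + (2 * k * s) ^ 2) = M at *
  generalize 2 * k * s = C at *
  generalize k ^ 2 - s ^ 2 = c at *
  have pos4 : ∀ a x y z b x' y' z', chGood a x y z → chGood b x' y' z' →
      0 ≤ chE c C (1 + a) x y z (1 + b) x' y' z' ∧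
      0 ≤ chE c C (1 + -a) (-x) (-y) (-z) (1 + b) x' y' z' ∧
      0 ≤ chE c C (1 + a) x y z (1 + -b) (-x') (-y') (-z') ∧
      0 ≤ chE c C (1 + -a) (-x) (-y) (-z) (1 + -b) (-x') (-y') (-z') := by
    intro a x y z b x' y' z' hA hB
    exact ⟨pos _ _ _ _ _ _ _ _ hA hB, pos _ _ _ _ _ _ _ _ (chGood_neg hA) hB,
      pos _ _ _ _ _ _ _ _ hA (chGood_neg hB),
      pos _ _ _ _ _ _ _ _ (chGood_neg hA) (chGood_neg hB)⟩
  clear pos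
  -- reduce a0
  refine ch_conv (fun a0 x0 y0 z0 => chF c C a0 x0 y0 z0 a1 x1 y1 z1 b0 u0 v0 w0 b1 u1 v1 w1) M
    (b0 + b1 + c * (w0 + w1)) (C * (u0 + u1)) (-C * (v0 + v1)) (c * (b0 + b1) + w0 + w1)
    (chF c C 0 0 0 0 a1 x1 y1 z1 b0 u0 v0 w0 b1 u1 v1 w1)
    (by intros; simp only [chF, chE]; ring) ?_ ?_ ?_ a0 x0 y0 z0 hA0
  · have p := pos4 _ _ _ _ _ _ _ _ hA1 hB0
    have q := pos4 _ _ _ _ _ _ _ _ hA1 hB1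
    simp only [chF, chE] at p q ⊢
    linarith [p.2.2.1, q.2.2.2]
  · have p := pos4 _ _ _ _ _ _ _ _ hA1 hB0
    have q := pos4 _ _ _ _ _ _ _ _ hA1 hB1
    simp only [chF, chE] at p q ⊢
    linarith [p.2.1, q.1]
  clear hA0 a0 x0 y0 z0
  intro x0 y0 z0 hs0
  have hA0 := chGood_sphere hs0
  -- reduce a1
  refine ch_conv (fun a1 x1 y1 z1 => chF c C 0 x0 y0 z0 a1 x1 y1 z1 b0 u0 v0 w0 b1 u1 v1 w1) M
    (b0 - b1 + c * (w0 - w1)) (C * (u0 - u1)) (-C * (v0 - v1)) (c * (b0 - b1) + w0 - w1)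
    (chF c C 0 x0 y0 z0 0 0 0 0 b0 u0 v0 w0 b1 u1 v1 w1)
    (by intros; simp only [chF, chE]; ring) ?_ ?_ ?_ a1 x1 y1 z1 hA1
  · have p := pos4 _ _ _ _ _ _ _ _ hA0 hB0
    have q := pos4 _ _ _ _ _ _ _ _ hA0 hB1
    simp only [chF, chE] at p q ⊢
    linarith [p.2.2.1, q.2.1]
  · have p := pos4 _ _ _ _ _ _ _ _ hA0 hB0
    have q := pos4 _ _ _ _ _ _ _ _ hA0 hB1
    simp only [chF, chE] at p q ⊢
    linarith [p.2.1, q.2.2.1]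
  clear hA1 a1 x1 y1 z1
  intro x1 y1 z1 hs1
  have hA1 := chGood_sphere hs1
  -- reduce b0
  refine ch_conv (fun b0 u0 v0 w0 => chF c C 0 x0 y0 z0 0 x1 y1 z1 b0 u0 v0 w0 b1 u1 v1 w1) M
    (c * (z0 + z1)) (C * (x0 + x1)) (-C * (y0 + y1)) (z0 + z1)
    (chF c C 0 x0 y0 z0 0 x1 y1 z1 0 0 0 0 b1 u1 v1 w1)
    (by intros; simp only [chF, chE]; ring) ?_ ?_ ?_ b0 u0 v0 w0 hB0
  · have p := pos4 _ _ _ _ _ _ _ _ hA0 hB1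
    have q := pos4 _ _ _ _ _ _ _ _ hA1 hB1
    simp only [chF, chE] at p q ⊢
    linarith [p.2.1, q.2.2.2]
  · have p := pos4 _ _ _ _ _ _ _ _ hA0 hB1
    have q := pos4 _ _ _ _ _ _ _ _ hA1 hB1
    simp only [chF, chE] at p q ⊢
    linarith [p.2.2.1, q.1]
  clear hB0 b0 u0 v0 w0
  intro u0 v0 w0 ht0
  have hB0 := chGood_sphere ht0
  -- reduce b1
  refine ch_conv (fun b1 u1 v1 w1 => chF c C 0 x0 y0 z0 0 x1 y1 z1 0 u0 v0 w0 b1 u1 v1 w1) M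
    (c * (z0 - z1)) (C * (x0 - x1)) (-C * (y0 - y1)) (z0 - z1)
    (chF c C 0 x0 y0 z0 0 x1 y1 z1 0 u0 v0 w0 0 0 0 0)
    (by intros; simp only [chF, chE]; ring) ?_ ?_ ?_ b1 u1 v1 w1 hB1
  · have p := pos4 _ _ _ _ _ _ _ _ hA0 hB0
    have q := pos4 _ _ _ _ _ _ _ _ hA1 hB0
    simp only [chF, chE] at p q ⊢
    linarith [p.2.1, q.2.2.1]
  · have p := pos4 _ _ _ _ _ _ _ _ hA0 hB0
    have q := pos4 _ _ _ _ _ _ _ _ hA1 hB0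
    simp only [chF, chE] at p q ⊢
    linarith [p.2.2.1, q.2.1]
  intro u1 v1 w1 ht1
  exact sph _ _ _ _ _ _ _ _ _ _ _ _ hs0 hs1 ht0 ht1

lemma ch_entries {A : Matrix (Fin 2) (Fin 2) ℂ} (hA : A.PosSemidef) :
    (A 0 0).im = 0 ∧ (A 1 1).im = 0 ∧ (A 1 0).re = (A 0 1).re ∧ (A 1 0).im = -(A 0 1).im ∧
    0 ≤ (A 0 0).re ∧ 0 ≤ (A 1 1).re ∧
    (A 0 1).re ^ 2 + (A 0 1).im ^ 2 ≤ (A 0 0).re * (A 1 1).re := by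
  have h0 := Complex.le_def.1 (hA.diag_nonneg (i := 0))
  have h1 := Complex.le_def.1 (hA.diag_nonneg (i := 1))
  have hd := Complex.le_def.1 hA.det_nonneg
  have hh : star (A 0 1) = A 1 0 := hA.1.apply 1 0
  rw [Matrix.det_fin_two, ← hh] at hd
  rw [← hh]
  simp at h0 h1 hd
  refine ⟨h0.2.symm, h1.2.symm, by simp, by simp, h0.1, h1.1, ?_⟩
  have := hd.1
  rw [← h0.2, ← h1.2] at this
  nlinarith

lemma ch_povm {A : Matrix (Fin 2) (Fin 2) ℂ} (hA : IsPOVMElem A) :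
    (A 0 0).im = 0 ∧ (A 1 1).im = 0 ∧ (A 1 0).re = (A 0 1).re ∧ (A 1 0).im = -(A 0 1).im ∧
    chGood ((A 0 0).re + (A 1 1).re - 1) (2 * (A 0 1).re) (2 * (A 0 1).im)
      ((A 0 0).re - (A 1 1).re) := by
  obtain ⟨h1, h2, h3, h4, h5, h6, h7⟩ := ch_entries hA.1
  obtain ⟨-, -, -, -, g5, g6, g7⟩ := ch_entries hA.2
  simp at g5 g6 g7
  exact ⟨h1, h2, h3, h4, by linarith, by linarith, by nlinarith, by nlinarith⟩

lemma ch_value (γ : ℝ) (A0 A1 B0 B1 : Matrix (Fin 2) (Fin 2) ℂ)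
    (hA0 : IsPOVMElem A0) (hA1 : IsPOVMElem A1)
    (hB0 : IsPOVMElem B0) (hB1 : IsPOVMElem B1) :
    2 * tiltedCHBell 1 (schmidtState γ) A0 A1 B0 B1 + 1 =
    chF (Real.cos γ ^ 2 - Real.sin γ ^ 2) (2 * Real.cos γ * Real.sin γ)
      ((A0 0 0).re + (A0 1 1).re - 1) (2 * (A0 0 1).re) (2 * (A0 0 1).im)
      ((A0 0 0).re - (A0 1 1).re)
      ((A1 0 0).re + (A1 1 1).re - 1) (2 * (A1 0 1).re) (2 * (A1 0 1).im)
      ((A1 0 0).re - (A1 1 1).re)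
      ((B0 0 0).re + (B0 1 1).re - 1) (2 * (B0 0 1).re) (2 * (B0 0 1).im)
      ((B0 0 0).re - (B0 1 1).re)
      ((B1 0 0).re + (B1 1 1).re - 1) (2 * (B1 0 1).re) (2 * (B1 0 1).im)
      ((B1 0 0).re - (B1 1 1).re) / 2 := by
  obtain ⟨a1, a2, a3, a4, -⟩ := ch_povm hA0
  obtain ⟨b1, b2, b3, b4, -⟩ := ch_povm hA1
  obtain ⟨c1, c2, c3, c4, -⟩ := ch_povm hB0
  obtain ⟨d1, d2, d3, d4, -⟩ := ch_povm hB1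
  have hks := Real.cos_sq_add_sin_sq γ
  have hval : tiltedCHBell 1 (schmidtState γ) A0 A1 B0 B1 =
      Real.cos γ ^ 2 * ((A0 0 0).re * (B0 0 0).re + (A0 0 0).re * (B1 0 0).re
        + (A1 0 0).re * (B0 0 0).re - (A1 0 0).re * (B1 0 0).re - (A0 0 0).re - (B0 0 0).re)
      + Real.sin γ ^ 2 * ((A0 1 1).re * (B0 1 1).re + (A0 1 1).re * (B1 1 1).re
        + (A1 1 1).re * (B0 1 1).re - (A1 1 1).re * (B1 1 1).re - (A0 1 1).re - (B0 1 1).re)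
      + 2 * Real.cos γ * Real.sin γ *
       ((A0 0 1).re * (B0 0 1).re - (A0 0 1).im * (B0 0 1).im
       + ((A0 0 1).re * (B1 0 1).re - (A0 0 1).im * (B1 0 1).im)
       + ((A1 0 1).re * (B0 0 1).re - (A1 0 1).im * (B0 0 1).im)
       - ((A1 0 1).re * (B1 0 1).re - (A1 0 1).im * (B1 0 1).im)) := by
    simp [tiltedCHBell, schmidtState, schmidtVec, Matrix.trace, Fintype.sum_prod_type,
      Fin.sum_univ_two, Matrix.mul_apply, Matrix.vecMulVec_apply, Matrix.kroneckerMap_apply,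
      Matrix.one_apply, -Complex.ofReal_cos, -Complex.ofReal_sin, Complex.conj_ofReal,
      a1, a2, a3, a4, b1, b2, b3, b4, c1, c2, c3, c4, d1, d2, d3, d4]
    ring
  rw [hval]
  generalize Real.cos γ = k at *
  generalize Real.sin γ = s at *
  have : s ^ 2 = 1 - k ^ 2 := by linarith
  simp only [chF, chE]
  rw [this]
  ring

/-- a nonnegative observed Clauser–Horne value `S = S^(1)(ρ_γ; …)`
yields the lower bound `sin(2γ) ≥ √((2S + 1)² − 1)` on the concurrence of `|ψ^γ⟩`. -/
theorem concurrence_lower_bound_of_CH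
    (γ : ℝ) (hγ₀ : 0 ≤ γ) (hγ₁ : γ ≤ Real.pi / 4)
    (A0 A1 B0 B1 : Matrix (Fin 2) (Fin 2) ℂ)
    (hA0 : IsPOVMElem A0) (hA1 : IsPOVMElem A1)
    (hB0 : IsPOVMElem B0) (hB1 : IsPOVMElem B1)
    (hS : 0 ≤ tiltedCHBell 1 (schmidtState γ) A0 A1 B0 B1) :
    Real.sin (2 * γ) ≥
      Real.sqrt ((2 * tiltedCHBell 1 (schmidtState γ) A0 A1 B0 B1 + 1) ^ 2 - 1) := by
  have h := ch_main (Real.cos γ) (Real.sin γ) _ _ _ _ _ _ _ _ _ _ _ _ _ _ _ _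
    (Real.cos_sq_add_sin_sq γ) (ch_povm hA0).2.2.2.2 (ch_povm hA1).2.2.2.2
    (ch_povm hB0).2.2.2.2 (ch_povm hB1).2.2.2.2
  have hv := ch_value γ A0 A1 B0 B1 hA0 hA1 hB0 hB1
  have hC : Real.sin (2 * γ) = 2 * Real.cos γ * Real.sin γ := by
    rw [Real.sin_two_mul]; ring
  have hC0 : 0 ≤ Real.sin (2 * γ) :=
    Real.sin_nonneg_of_nonneg_of_le_pi (by linarith) (by linarith [Real.pi_pos])
  rw [← hC] at h hv
  have h2 : 2 * tiltedCHBell 1 (schmidtState γ) A0 A1 B0 B1 + 1 ≤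
      Real.sqrt (1 + Real.sin (2 * γ) ^ 2) := by linarith
  have h3 := Real.le_sqrt' (by linarith) |>.1 h2
  exact Real.sqrt_le_iff.2 ⟨hC0, by linarith⟩
end

section
/- Let τ satisfy 1/2 + 1/√2 ≤ τ < 3/2 and let γ ∈ [0, π/4]. If 2(1−τ)·sin²γ + (√(1 + sin²(2γ)) − 1)/2 > 0, then sin(2γ) ≤ C_τ, where C_τ = 2·√(2(τ−1)(2τ−1)(3−2τ)) / (5 − 8τ + 4τ²). -/
/-- for `1/2 + 1/√2 ≤ τ < 3/2` and `γ ∈ [0, π/4]`, if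
`2(1−τ)sin²γ + (√(1 + sin²2γ) − 1)/2 > 0` then the concurrence `sin 2γ` is at most
`C_τ = 2√(2(τ−1)(2τ−1)(3−2τ))/(5 − 8τ + 4τ²)`. -/
theorem concurrence_le_C_tau
    (τ : ℝ) (hτ₁ : 1 / 2 + 1 / Real.sqrt 2 ≤ τ) (hτ₂ : τ < 3 / 2)
    (γ : ℝ) (hγ₀ : 0 ≤ γ) (hγ₁ : γ ≤ Real.pi / 4)
    (hviol : 0 < 2 * (1 - τ) * Real.sin γ ^ 2 +
      (Real.sqrt (1 + Real.sin (2 * γ) ^ 2) - 1) / 2) :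
    Real.sin (2 * γ) ≤
      2 * Real.sqrt (2 * (τ - 1) * (2 * τ - 1) * (3 - 2 * τ)) /
        (5 - 8 * τ + 4 * τ ^ 2) := by
  have hc0 : 0 ≤ Real.cos (2 * γ) :=
    Real.cos_nonneg_of_mem_Icc ⟨by linarith [Real.pi_pos], by linarith⟩
  have hcs := Real.sin_sq_add_cos_sq (2 * γ)
  have hc1 := Real.cos_le_one (2 * γ)
  have hsg : Real.sin γ ^ 2 = (1 - Real.cos (2 * γ)) / 2 := by
    have h1 := Real.cos_two_mul γ
    have h2 := Real.sin_sq_add_cos_sq γ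
    linarith
  rw [hsg] at hviol
  have hr : 0 < 1 / Real.sqrt 2 := by positivity
  have hr2 : (1 / Real.sqrt 2) ^ 2 = 1 / 2 := by
    rw [div_pow, Real.sq_sqrt (by norm_num)]; norm_num
  generalize 1 / Real.sqrt 2 = r at *
  have hτ : 1 / 2 ≤ (τ - 1 / 2) ^ 2 := by nlinarith
  have ha : 0 < τ - 1 := by nlinarith
  have hD : 0 < 5 - 8 * τ + 4 * τ ^ 2 := by nlinarith [sq_nonneg (τ - 1)]
  generalize Real.cos (2 * γ) = c at *
  generalize Real.sin (2 * γ) = s at *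
  have hlt : 1 + 2 * (τ - 1) * (1 - c) < Real.sqrt (1 + s ^ 2) := by linarith
  have hnn : 0 ≤ (τ - 1) * (1 - c) := mul_nonneg ha.le (by linarith)
  rw [Real.lt_sqrt (by linarith)] at hlt
  have hprod : 0 < (1 - c) * ((5 - 8 * τ + 4 * τ ^ 2) * c - (4 * τ ^ 2 - 4 * τ - 1)) := by
    have h : s ^ 2 = 1 - c ^ 2 := by linarith
    rw [h] at hlt
    nlinarith
  have hk : 0 < (5 - 8 * τ + 4 * τ ^ 2) * c - (4 * τ ^ 2 - 4 * τ - 1) :=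
    pos_of_mul_pos_right hprod (by linarith)
  have hk0 : 0 ≤ 4 * τ ^ 2 - 4 * τ - 1 := by nlinarith
  have hsq : (4 * τ ^ 2 - 4 * τ - 1) ^ 2 ≤ ((5 - 8 * τ + 4 * τ ^ 2) * c) ^ 2 :=
    pow_le_pow_left₀ hk0 (by linarith) 2
  rw [le_div_iff₀ hD]
  have : s * (5 - 8 * τ + 4 * τ ^ 2) / 2 ≤
      Real.sqrt (2 * (τ - 1) * (2 * τ - 1) * (3 - 2 * τ)) := by
    apply Real.le_sqrt_of_sq_le
    have h : s ^ 2 = 1 - c ^ 2 := by linarith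
    have e : (s * (5 - 8 * τ + 4 * τ ^ 2) / 2) ^ 2
      = ((5 - 8 * τ + 4 * τ ^ 2) ^ 2 - ((5 - 8 * τ + 4 * τ ^ 2) * c) ^ 2) / 4 := by
      rw [div_pow, mul_pow, h]; ring
    rw [e]
    linarith
  linarith
end

section
/- Let τ satisfy 1/2 + 1/√2 ≤ τ < 3/2 and let γ ∈ [0, π/4] be such that sin(2γ) > C_τ, where C_τ = 2·√(2(τ−1)(2τ−1)(3−2τ))/(5 − 8τ + 4τ²). Then for all POVM elements A₀,A₁,B₀,B₁ on ℂ², the state |ψ^γ⟩ does not violate the tilted-CH inequality: S^(τ)(ρ_γ; A₀,A₁,B₀,B₁) ≤ 0. (Thus an observed violation S^(τ) > 0 yields the semi-device-independent upper bound sin(2γ) ≤ C_τ on the concurrence.) -/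
open Matrix
open scoped Kronecker ComplexOrder

lemma le_of_sq_le_sq_aux {a b : ℝ} (h : a ^ 2 ≤ b ^ 2) (hb : 0 ≤ b) : a ≤ b :=
  (abs_le_of_sq_le_sq' h hb).2

/-- real coordinates of a qubit POVM element -/
def PV (u v x y : ℝ) : Prop :=
  0 ≤ u ∧ 0 ≤ v ∧ x ^ 2 + y ^ 2 ≤ u * v ∧ u ≤ 1 ∧ v ≤ 1 ∧ x ^ 2 + y ^ 2 ≤ (1 - u) * (1 - v)

/-- correlation in real coordinates -/
noncomputable def EE (c s u v x y u' v' x' y' : ℝ) : ℝ :=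
  (1 + c) / 2 * (u * u') + (1 - c) / 2 * (v * v') + s * (x * x' - y * y')

lemma PV.compl {u v x y : ℝ} (h : PV u v x y) : PV (1 - u) (1 - v) (-x) (-y) := by
  obtain ⟨h1, h2, h3, h4, h5, h6⟩ := h
  refine ⟨by linarith, by linarith, by nlinarith, by linarith, by linarith, by nlinarith⟩

lemma PV.one : PV 1 1 0 0 := by
  refine ⟨?_, ?_, ?_, ?_, ?_, ?_⟩ <;> norm_num

lemma PV.unit {z x y : ℝ} (h : z ^ 2 + x ^ 2 + y ^ 2 = 1 / 4) : PV (1 / 2 + z) (1 / 2 - z) x y := by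
  have h1 : z ≤ 1 / 2 := by nlinarith [sq_nonneg x, sq_nonneg y]
  have h2 : -(1 / 2) ≤ z := by nlinarith [sq_nonneg x, sq_nonneg y]
  refine ⟨by linarith, by linarith, by nlinarith, by linarith, by linarith, by nlinarith⟩

lemma EE_nonneg {c s u v x y u' v' x' y' : ℝ} (hc0 : 0 ≤ c) (hc1 : c ≤ 1)
    (hcs : c ^ 2 + s ^ 2 = 1) (h : PV u v x y) (h' : PV u' v' x' y') :
    0 ≤ EE c s u v x y u' v' x' y' := by
  obtain ⟨h1, h2, h3, -, -, -⟩ := h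
  obtain ⟨h1', h2', h3', -, -, -⟩ := h'
  unfold EE
  have hk : (x * x' - y * y') ^ 2 ≤ (u * v) * (u' * v') := by
    have : (x ^ 2 + y ^ 2) * (x' ^ 2 + y' ^ 2) ≤ (u * v) * (u' * v') :=
      mul_le_mul h3 h3' (by positivity) (by positivity)
    nlinarith [sq_nonneg (x * y' + y * x')]
  have hG : 0 ≤ (1 + c) / 2 * (u * u') := by positivity
  have hH : 0 ≤ (1 - c) / 2 * (v * v') := mul_nonneg (by linarith) (by positivity)
  have hs : (s * (x * x' - y * y')) ^ 2 ≤ ((1 + c) / 2 * (u * u') + (1 - c) / 2 * (v * v')) ^ 2 := by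
    have e1 : (s * (x * x' - y * y')) ^ 2 ≤ s ^ 2 * ((u * v) * (u' * v')) := by
      rw [mul_pow]; exact mul_le_mul_of_nonneg_left hk (sq_nonneg s)
    have e2 : s ^ 2 * ((u * v) * (u' * v')) =
        4 * ((1 + c) / 2 * (u * u')) * ((1 - c) / 2 * (v * v')) := by
      rw [show s ^ 2 = 1 - c ^ 2 by linarith]; ring
    nlinarith [sq_nonneg ((1 + c) / 2 * (u * u') - (1 - c) / 2 * (v * v'))]
  have := abs_le_of_sq_le_sq' hs (by linarith)
  linarith [this.1]

lemma red (k k1 k2 k3 k4 : ℝ) (h0 : k ≤ 0) (h1 : k + k1 + k2 ≤ 0)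
    (hu : ∀ z x y : ℝ, z ^ 2 + x ^ 2 + y ^ 2 = 1 / 4 →
      k + k1 * (1 / 2 + z) + k2 * (1 / 2 - z) + k3 * x + k4 * y ≤ 0)
    {u v x y : ℝ} (h : PV u v x y) : k + k1 * u + k2 * v + k3 * x + k4 * y ≤ 0 := by
  obtain ⟨p1, p2, p3, p4, p5, p6⟩ := h
  set R := Real.sqrt (((u - v) / 2) ^ 2 + x ^ 2 + y ^ 2) with hR
  have hR0 : 0 ≤ R := Real.sqrt_nonneg _
  have hR2 : R ^ 2 = ((u - v) / 2) ^ 2 + x ^ 2 + y ^ 2 := Real.sq_sqrt (by positivity)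
  have hm : R ≤ (u + v) / 2 := by
    apply le_of_sq_le_sq_aux _ (by linarith)
    nlinarith
  have hm' : R ≤ 1 - (u + v) / 2 := by
    apply le_of_sq_le_sq_aux _ (by linarith)
    nlinarith
  rcases hR0.eq_or_lt with h | h
  · have hz : u - v = 0 := by
      rw [← h] at hR2; nlinarith [sq_nonneg (u - v), sq_nonneg x, sq_nonneg y]
    have hx : x = 0 := by
      rw [← h] at hR2; nlinarith [sq_nonneg (u - v), sq_nonneg x, sq_nonneg y]
    have hy : y = 0 := by
      rw [← h] at hR2; nlinarith [sq_nonneg (u - v), sq_nonneg x, sq_nonneg y]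
    have hv : v = u := by linarith
    subst hx hy hv
    nlinarith
  · have key := hu ((u - v) / 2 / (2 * R)) (x / (2 * R)) (y / (2 * R)) (by
      field_simp; linarith)
    have e : k + k1 * u + k2 * v + k3 * x + k4 * y =
        ((u + v) / 2 - R) * (k + k1 + k2) + (1 - (u + v) / 2 - R) * k +
        2 * R * (k + k1 * (1 / 2 + (u - v) / 2 / (2 * R)) + k2 * (1 / 2 - (u - v) / 2 / (2 * R))
          + k3 * (x / (2 * R)) + k4 * (y / (2 * R))) := by
      field_simp; ring
    rw [e]
    have q1 := mul_nonneg (sub_nonneg.2 hm) (neg_nonneg.2 h1)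
    have q2 := mul_nonneg (sub_nonneg.2 hm') (neg_nonneg.2 h0)
    have q3 := mul_nonneg (by linarith : 0 ≤ 2 * R) (neg_nonneg.2 key)
    linarith

lemma cauchy3 (a b c x y z : ℝ) (h : a ^ 2 + b ^ 2 + c ^ 2 = 1 / 4) :
    a * x + b * y + c * z ≤ Real.sqrt (x ^ 2 + y ^ 2 + z ^ 2) / 2 := by
  have : 2 * (a * x + b * y + c * z) ≤ Real.sqrt (x ^ 2 + y ^ 2 + z ^ 2) := by
    apply Real.le_sqrt_of_sq_le
    have : (a * x + b * y + c * z) ^ 2 ≤ (a ^ 2 + b ^ 2 + c ^ 2) * (x ^ 2 + y ^ 2 + z ^ 2) := by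
      nlinarith [sq_nonneg (a * y - b * x), sq_nonneg (a * z - c * x), sq_nonneg (b * z - c * y)]
    rw [h] at this
    nlinarith
  linarith

/-- Horodecki-type bound -/
lemma horo (c s N p1 p2 p3 q1 q2 q3 : ℝ) (hcs : c ^ 2 + s ^ 2 = 1) (hN : 0 ≤ N)
    (hN2 : N ^ 2 = 1 + s ^ 2)
    (hpq : p1 * q1 + p2 * q2 + p3 * q3 = 0)
    (hsum : p1 ^ 2 + p2 ^ 2 + p3 ^ 2 + (q1 ^ 2 + q2 ^ 2 + q3 ^ 2) = 1) :
    Real.sqrt (p1 ^ 2 + (s * p2) ^ 2 + (-s * p3) ^ 2) +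
      Real.sqrt (q1 ^ 2 + (s * q2) ^ 2 + (-s * q3) ^ 2) ≤ N := by
  set X := Real.sqrt (p1 ^ 2 + (s * p2) ^ 2 + (-s * p3) ^ 2)
  set Y := Real.sqrt (q1 ^ 2 + (s * q2) ^ 2 + (-s * q3) ^ 2)
  have hX0 : 0 ≤ X := Real.sqrt_nonneg _
  have hY0 : 0 ≤ Y := Real.sqrt_nonneg _
  have hX : X ^ 2 = p1 ^ 2 + (s * p2) ^ 2 + (-s * p3) ^ 2 := Real.sq_sqrt (by positivity)
  have hY : Y ^ 2 = q1 ^ 2 + (s * q2) ^ 2 + (-s * q3) ^ 2 := Real.sq_sqrt (by positivity)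
  set P := p1 ^ 2 + p2 ^ 2 + p3 ^ 2 with hP
  set Q := q1 ^ 2 + q2 ^ 2 + q3 ^ 2 with hQ
  have hP0 : 0 ≤ P := by positivity
  have hQ0 : 0 ≤ Q := by positivity
  have hX' : X ^ 2 = s ^ 2 * P + c ^ 2 * p1 ^ 2 := by
    rw [hX, hP, show c ^ 2 = 1 - s ^ 2 by linarith]; ring
  have hY' : Y ^ 2 = s ^ 2 * Q + c ^ 2 * q1 ^ 2 := by
    rw [hY, hQ, show c ^ 2 = 1 - s ^ 2 by linarith]; ring
  -- Bessel
  have hB : p1 ^ 2 * Q + q1 ^ 2 * P ≤ P * Q := by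
    have e : P * Q - p1 ^ 2 * Q - q1 ^ 2 * P =
        (p2 * q3 - p3 * q2) ^ 2 + (p2 * q2 + p3 * q3) ^ 2 - p1 ^ 2 * q1 ^ 2 := by
      rw [hP, hQ]; ring
    have e2 : (p2 * q2 + p3 * q3) ^ 2 = p1 ^ 2 * q1 ^ 2 := by
      rw [show p2 * q2 + p3 * q3 = -(p1 * q1) by linarith]; ring
    linarith [sq_nonneg (p2 * q3 - p3 * q2)]
  have hA : X ^ 2 * Q + Y ^ 2 * P ≤ N ^ 2 * (P * Q) := by
    rw [hX', hY', hN2]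
    have := mul_le_mul_of_nonneg_left hB (sq_nonneg c)
    have e : (1 + s ^ 2) * (P * Q) = 2 * s ^ 2 * (P * Q) + c ^ 2 * (P * Q) := by
      rw [show c ^ 2 = 1 - s ^ 2 by linarith]; ring
    linarith
  have hXP : X ^ 2 ≤ P := by
    rw [hX', hP]; nlinarith [mul_nonneg (sq_nonneg c) (sq_nonneg p2), mul_nonneg (sq_nonneg c) (sq_nonneg p3)]
  have hYQ : Y ^ 2 ≤ Q := by
    rw [hY', hQ]; nlinarith [mul_nonneg (sq_nonneg c) (sq_nonneg q2), mul_nonneg (sq_nonneg c) (sq_nonneg q3)]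
  clear_value X Y P Q
  apply le_of_sq_le_sq_aux _ hN
  rcases hP0.eq_or_lt with h | h
  · have : X = 0 := by
      have : X ^ 2 = 0 := le_antisymm (by linarith) (sq_nonneg X)
      exact pow_eq_zero_iff two_ne_zero |>.1 this
    rw [this, zero_add]
    linarith [sq_nonneg s]
  rcases hQ0.eq_or_lt with h' | h'
  · have : Y = 0 := by
      have : Y ^ 2 = 0 := le_antisymm (by linarith) (sq_nonneg Y)
      exact pow_eq_zero_iff two_ne_zero |>.1 this
    rw [this, add_zero]
    linarith [sq_nonneg s]
  have hPQ : 0 < P * Q := mul_pos h h'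
  have : (X + Y) ^ 2 * (P * Q) ≤ X ^ 2 * Q + Y ^ 2 * P := by
    have : X ^ 2 * Q + Y ^ 2 * P - (X + Y) ^ 2 * (P * Q) = (X * Q - Y * P) ^ 2 := by
      have hQP : Q = 1 - P := by linarith
      rw [hQP]; ring
    linarith [sq_nonneg (X * Q - Y * P)]
  exact le_of_mul_le_mul_right (this.trans hA) hPQ

/-- Bell value in real coordinates -/
noncomputable def SS (τ c s u0 v0 x0 y0 u1 v1 x1 y1 m0 n0 r0 t0 m1 n1 r1 t1 : ℝ) : ℝ :=
  EE c s u0 v0 x0 y0 m0 n0 r0 t0 + EE c s u0 v0 x0 y0 m1 n1 r1 t1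
  + EE c s u1 v1 x1 y1 m0 n0 r0 t0 - EE c s u1 v1 x1 y1 m1 n1 r1 t1
  - τ * EE c s u0 v0 x0 y0 1 1 0 0 - τ * EE c s 1 1 0 0 m0 n0 r0 t0

lemma SS_swap (τ c s u0 v0 x0 y0 u1 v1 x1 y1 m0 n0 r0 t0 m1 n1 r1 t1 : ℝ) :
    SS τ c s u0 v0 x0 y0 u1 v1 x1 y1 m0 n0 r0 t0 m1 n1 r1 t1 =
    SS τ c s m0 n0 r0 t0 m1 n1 r1 t1 u0 v0 x0 y0 u1 v1 x1 y1 := by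
  simp only [SS, EE]; ring

section
variable {τ c s u0 v0 x0 y0 u1 v1 x1 y1 m0 n0 r0 t0 m1 n1 r1 t1 : ℝ}

lemma SS_A0 (hτ : 1 ≤ τ) (hc0 : 0 ≤ c) (hc1 : c ≤ 1) (hcs : c ^ 2 + s ^ 2 = 1)
    (h1 : PV u1 v1 x1 y1) (g0 : PV m0 n0 r0 t0) (g1 : PV m1 n1 r1 t1)
    (hu : ∀ z x y : ℝ, z ^ 2 + x ^ 2 + y ^ 2 = 1 / 4 →
      SS τ c s (1 / 2 + z) (1 / 2 - z) x y u1 v1 x1 y1 m0 n0 r0 t0 m1 n1 r1 t1 ≤ 0)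
    (h0 : PV u0 v0 x0 y0) :
    SS τ c s u0 v0 x0 y0 u1 v1 x1 y1 m0 n0 r0 t0 m1 n1 r1 t1 ≤ 0 := by
  have E1 := EE_nonneg hc0 hc1 hcs h1 g1
  have E2 := EE_nonneg hc0 hc1 hcs h1.compl g0
  have E3 := EE_nonneg hc0 hc1 hcs PV.one g0
  have E4 := EE_nonneg hc0 hc1 hcs h1.compl g1.compl
  have E5 := EE_nonneg hc0 hc1 hcs h1 g0.compl
  have T3 := mul_nonneg (sub_nonneg.2 hτ) E3
  have := red
    (SS τ c s 0 0 0 0 u1 v1 x1 y1 m0 n0 r0 t0 m1 n1 r1 t1)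
    ((1 + c) / 2 * (m0 + m1 - τ)) ((1 - c) / 2 * (n0 + n1 - τ)) (s * (r0 + r1)) (-s * (t0 + t1))
    (by simp only [SS, EE] at *; linarith) (by simp only [SS, EE] at *; linarith)
    (by
      intro z x y h
      have := hu z x y h
      simp only [SS, EE] at *; linarith) h0
  simp only [SS, EE] at *; linarith

lemma SS_A1 (hτ : 1 ≤ τ) (hc0 : 0 ≤ c) (hc1 : c ≤ 1) (hcs : c ^ 2 + s ^ 2 = 1)
    (h0 : PV u0 v0 x0 y0) (g0 : PV m0 n0 r0 t0) (g1 : PV m1 n1 r1 t1)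
    (hu : ∀ z x y : ℝ, z ^ 2 + x ^ 2 + y ^ 2 = 1 / 4 →
      SS τ c s u0 v0 x0 y0 (1 / 2 + z) (1 / 2 - z) x y m0 n0 r0 t0 m1 n1 r1 t1 ≤ 0)
    (h1 : PV u1 v1 x1 y1) :
    SS τ c s u0 v0 x0 y0 u1 v1 x1 y1 m0 n0 r0 t0 m1 n1 r1 t1 ≤ 0 := by
  have E1 := EE_nonneg hc0 hc1 hcs h0 g1.compl
  have E2 := EE_nonneg hc0 hc1 hcs h0.compl g0
  have E3 := EE_nonneg hc0 hc1 hcs PV.one g0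
  have E4 := EE_nonneg hc0 hc1 hcs h0 PV.one
  have E5 := EE_nonneg hc0 hc1 hcs h0.compl g1
  have E6 := EE_nonneg hc0 hc1 hcs h0 g0.compl
  have T3 := mul_nonneg (sub_nonneg.2 hτ) E3
  have T4 := mul_nonneg (sub_nonneg.2 hτ) E4
  have := red
    (SS τ c s u0 v0 x0 y0 0 0 0 0 m0 n0 r0 t0 m1 n1 r1 t1)
    ((1 + c) / 2 * (m0 - m1)) ((1 - c) / 2 * (n0 - n1)) (s * (r0 - r1)) (-s * (t0 - t1))
    (by simp only [SS, EE] at *; linarith) (by simp only [SS, EE] at *; linarith)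
    (by
      intro z x y h
      have := hu z x y h
      simp only [SS, EE] at *; linarith) h1
  simp only [SS, EE] at *; linarith
end

lemma SS_unit {τ c s N z0 x0 y0 z1 x1 y1 w0 r0 t0 w1 r1 t1 : ℝ}
    (hτ : 1 ≤ τ) (hc0 : 0 ≤ c) (hcs : c ^ 2 + s ^ 2 = 1) (hN : 0 ≤ N)
    (hN2 : N ^ 2 = 1 + s ^ 2) (hNb : N ≤ 1 + (2 * τ - 2) * (1 - c))
    (h0 : z0 ^ 2 + x0 ^ 2 + y0 ^ 2 = 1 / 4) (h1 : z1 ^ 2 + x1 ^ 2 + y1 ^ 2 = 1 / 4)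
    (g0 : w0 ^ 2 + r0 ^ 2 + t0 ^ 2 = 1 / 4) (g1 : w1 ^ 2 + r1 ^ 2 + t1 ^ 2 = 1 / 4) :
    SS τ c s (1 / 2 + z0) (1 / 2 - z0) x0 y0 (1 / 2 + z1) (1 / 2 - z1) x1 y1
      (1 / 2 + w0) (1 / 2 - w0) r0 t0 (1 / 2 + w1) (1 / 2 - w1) r1 t1 ≤ 0 := by
  have k1 := cauchy3 z0 x0 y0 (w0 + w1) (s * (r0 + r1)) (-s * (t0 + t1)) h0
  have k2 := cauchy3 z1 x1 y1 (w0 - w1) (s * (r0 - r1)) (-s * (t0 - t1)) h1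
  have k3 := horo c s N (w0 + w1) (r0 + r1) (t0 + t1) (w0 - w1) (r0 - r1) (t0 - t1) hcs hN hN2
    (by linarith) (by linarith)
  have hz : -(1 / 2) ≤ z0 := by nlinarith [sq_nonneg x0, sq_nonneg y0]
  have hw : -(1 / 2) ≤ w0 := by nlinarith [sq_nonneg r0, sq_nonneg t0]
  have hk : 0 ≤ (τ - 1) * c := mul_nonneg (by linarith) hc0
  have k4 := mul_nonneg hk (by linarith : 0 ≤ z0 + w0 + 1)
  simp only [SS, EE]
  linarith

lemma PV_of_POVM {A : Matrix (Fin 2) (Fin 2) ℂ} (h : IsPOVMElem A) :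
    PV (A 0 0).re (A 1 1).re (A 0 1).re (A 0 1).im ∧ (A 0 0).im = 0 ∧ (A 1 1).im = 0 ∧
      (A 1 0).re = (A 0 1).re ∧ (A 1 0).im = - (A 0 1).im := by
  obtain ⟨h1, h2⟩ := h
  have a0 := h1.diag_nonneg (i := 0)
  have a1 := h1.diag_nonneg (i := 1)
  have b0 := h2.diag_nonneg (i := 0)
  have b1 := h2.diag_nonneg (i := 1)
  have ad := h1.det_nonneg
  have bd := h2.det_nonneg
  have e := h1.isHermitian.apply 0 1
  have e0 : star (A 1 0) = A 0 1 := e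
  have er := congrArg Complex.re e0
  have ei := congrArg Complex.im e0
  rw [Matrix.det_fin_two] at ad bd
  simp [Complex.le_def] at *
  obtain ⟨a0, a0'⟩ := a0
  obtain ⟨a1, a1'⟩ := a1
  have hi : (A 1 0).im = -(A 0 1).im := by linarith
  rw [er, hi] at ad bd
  refine ⟨⟨a0, a1, ?_, ?_, ?_, ?_⟩, ?_, ?_, er, hi⟩
  · have := ad.1; simp only [← a0', ← a1'] at this; nlinarith
  · linarith [b0.1]
  · linarith [b1.1]
  · have := bd.1; simp only [← a0', ← a1'] at this; nlinarith
  · exact a0'.symm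
  · exact a1'.symm

lemma EE_of_trace (γ : ℝ) {A B : Matrix (Fin 2) (Fin 2) ℂ} (hA : IsPOVMElem A) (hB : IsPOVMElem B) :
    (Matrix.trace (schmidtState γ * (A ⊗ₖ B))).re =
      EE (Real.cos (2 * γ)) (Real.sin (2 * γ)) (A 0 0).re (A 1 1).re (A 0 1).re (A 0 1).im
        (B 0 0).re (B 1 1).re (B 0 1).re (B 0 1).im := by
  obtain ⟨-, a1, a2, a3, a4⟩ := PV_of_POVM hA
  obtain ⟨-, b1, b2, b3, b4⟩ := PV_of_POVM hB
  have hc := Real.cos_two_mul γ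
  have hs := Real.sin_two_mul γ
  have h1 := Real.sin_sq_add_cos_sq γ
  simp [Matrix.trace, Matrix.mul_apply, Fintype.sum_prod_type, schmidtState, schmidtVec,
    Matrix.vecMulVec_apply, -Complex.ofReal_cos, -Complex.ofReal_sin, a1, a2, a3, a4, b1, b2, b3, b4, EE]
  rw [hc, hs]
  have h2 : Real.sin γ ^ 2 = 1 - Real.cos γ ^ 2 := by linarith
  ring_nf
  rw [h2]
  ring

/-- for `1/2 + 1/√2 ≤ τ < 3/2`, any two-qubit pure state `|ψ^γ⟩`
whose concurrence `sin 2γ` exceeds `C_τ` cannot violate the tilted-CH inequality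
`I^(τ)`, whatever POVM elements are measured. -/
theorem no_violation_of_concurrence_gt_C_tau
    (τ : ℝ) (hτ₁ : 1 / 2 + 1 / Real.sqrt 2 ≤ τ) (hτ₂ : τ < 3 / 2)
    (γ : ℝ) (hγ₀ : 0 ≤ γ) (hγ₁ : γ ≤ Real.pi / 4)
    (hC : 2 * Real.sqrt (2 * (τ - 1) * (2 * τ - 1) * (3 - 2 * τ)) /
        (5 - 8 * τ + 4 * τ ^ 2) < Real.sin (2 * γ))
    (A0 A1 B0 B1 : Matrix (Fin 2) (Fin 2) ℂ)
    (hA0 : IsPOVMElem A0) (hA1 : IsPOVMElem A1)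
    (hB0 : IsPOVMElem B0) (hB1 : IsPOVMElem B1) :
    tiltedCHBell τ (schmidtState γ) A0 A1 B0 B1 ≤ 0 := by
  set c := Real.cos (2 * γ) with hc
  set s := Real.sin (2 * γ) with hs
  have hcs : c ^ 2 + s ^ 2 = 1 := Real.cos_sq_add_sin_sq _
  have hc0 : 0 ≤ c := Real.cos_nonneg_of_neg_pi_div_two_le_of_le
    (by linarith [Real.pi_pos]) (by linarith)
  have hc1 : c ≤ 1 := Real.cos_le_one _
  have hr : 0 < Real.sqrt 2 := by positivity
  have hr2 : Real.sqrt 2 ^ 2 = 2 := Real.sq_sqrt (by norm_num)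
  have hri : 1 / Real.sqrt 2 = Real.sqrt 2 / 2 := by field_simp; linarith
  have ht : Real.sqrt 2 ≤ 2 * τ - 1 := by rw [hri] at hτ₁; linarith
  have ht2 : 2 ≤ (2 * τ - 1) ^ 2 := by nlinarith
  have hτ : 1 ≤ τ := by nlinarith
  have hD : 0 < 5 - 8 * τ + 4 * τ ^ 2 := by nlinarith [sq_nonneg (τ - 1)]
  have hrad : 0 ≤ 2 * (τ - 1) * (2 * τ - 1) * (3 - 2 * τ) :=
    mul_nonneg (mul_nonneg (by linarith) (by linarith)) (by linarith)
  have hq := Real.sq_sqrt hrad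
  have hq0 := Real.sqrt_nonneg (2 * (τ - 1) * (2 * τ - 1) * (3 - 2 * τ))
  rw [div_lt_iff₀ hD] at hC
  have hsq : 4 * (2 * (τ - 1) * (2 * τ - 1) * (3 - 2 * τ)) ≤ (s * (5 - 8 * τ + 4 * τ ^ 2)) ^ 2 := by
    rw [← hq]; nlinarith
  have hcD : c * (5 - 8 * τ + 4 * τ ^ 2) ≤ (2 * τ - 1) ^ 2 - 2 := by
    apply le_of_sq_le_sq_aux _ (by linarith)
    have : (c * (5 - 8 * τ + 4 * τ ^ 2)) ^ 2 + (s * (5 - 8 * τ + 4 * τ ^ 2)) ^ 2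
      = (5 - 8 * τ + 4 * τ ^ 2) ^ 2 := by
      rw [mul_pow, mul_pow, ← add_mul, hcs, one_mul]
    nlinarith
  have hN2 : Real.sqrt (1 + s ^ 2) ^ 2 = 1 + s ^ 2 := Real.sq_sqrt (by positivity)
  have hNb : Real.sqrt (1 + s ^ 2) ≤ 1 + (2 * τ - 2) * (1 - c) := by
    have h0 : 0 ≤ (2 * τ - 2) * (1 - c) := mul_nonneg (by linarith) (by linarith)
    apply le_of_sq_le_sq_aux _ (by linarith)
    rw [hN2, show s ^ 2 = 1 - c ^ 2 by linarith]
    nlinarith [mul_nonneg (sub_nonneg.2 hc1) (sub_nonneg.2 hcD)]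
  have hone : IsPOVMElem (1 : Matrix (Fin 2) (Fin 2) ℂ) :=
    ⟨Matrix.PosSemidef.one, by rw [sub_self]; exact Matrix.PosSemidef.zero⟩
  have hval : tiltedCHBell τ (schmidtState γ) A0 A1 B0 B1 =
      SS τ c s (A0 0 0).re (A0 1 1).re (A0 0 1).re (A0 0 1).im
        (A1 0 0).re (A1 1 1).re (A1 0 1).re (A1 0 1).im
        (B0 0 0).re (B0 1 1).re (B0 0 1).re (B0 0 1).im
        (B1 0 0).re (B1 1 1).re (B1 0 1).re (B1 0 1).im := by
    simp only [tiltedCHBell, Matrix.mul_add, Matrix.mul_sub, Matrix.trace_add, Matrix.trace_sub,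
      Complex.add_re, Complex.sub_re, EE_of_trace γ hA0 hB0, EE_of_trace γ hA0 hB1,
      EE_of_trace γ hA1 hB0, EE_of_trace γ hA1 hB1, EE_of_trace γ hA0 hone,
      EE_of_trace γ hone hB0]
    simp [SS, hc, hs]
  rw [hval]
  have pA0 := (PV_of_POVM hA0).1
  have pA1 := (PV_of_POVM hA1).1
  have pB0 := (PV_of_POVM hB0).1
  have pB1 := (PV_of_POVM hB1).1
  refine SS_A0 hτ hc0 hc1 hcs pA1 pB0 pB1 (fun z0 x0 y0 h0 => ?_) pA0
  refine SS_A1 hτ hc0 hc1 hcs (PV.unit h0) pB0 pB1 (fun z1 x1 y1 h1 => ?_) pA1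
  rw [SS_swap]
  refine SS_A0 hτ hc0 hc1 hcs pB1 (PV.unit h0) (PV.unit h1) (fun w0 r0 t0 g0 => ?_) pB0
  refine SS_A1 hτ hc0 hc1 hcs (PV.unit g0) (PV.unit h0) (PV.unit h1) (fun w1 r1 t1 g1 => ?_) pB1
  exact SS_unit hτ hc0 hcs (Real.sqrt_nonneg _) hN2 hNb g0 g1 h0 h1
end

section
/- For every d ≥ 1, every density matrix ρ on ℂ^d⊗ℂ^d, all POVM elements A₀,A₁,B₀,B₁ on ℂ^d, and every τ ≥ 1, the tilted-CH Bell value obeys the Tsirelson-type bound S^(τ)(ρ; A₀,A₁,B₀,B₁) ≤ 1/√2 − 1/2. -/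
open Matrix
open scoped Kronecker ComplexOrder

open scoped MatrixOrder Matrix.Norms.L2Operator in
theorem aux_trace_nonneg {n : Type*} [Fintype n] [DecidableEq n] {ρ X : Matrix n n ℂ}
    (hρ : ρ.PosSemidef) (hX : X.PosSemidef) : 0 ≤ (Matrix.trace (ρ * X)).re := by
  obtain ⟨C, rfl⟩ := (CStarAlgebra.nonneg_iff_eq_star_mul_self).1 hρ.nonneg
  rw [Matrix.star_eq_conjTranspose]
  rw [Matrix.mul_assoc, Matrix.trace_mul_comm]
  exact (Complex.le_def.1 (hX.mul_mul_conjTranspose_same C).trace_nonneg).1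

theorem aux_sub_sq {n : Type*} [Fintype n] [DecidableEq n] {X : Matrix n n ℂ}
    (h : X.PosSemidef) (h1 : (1 - X).PosSemidef) : (X - X * X).PosSemidef := by
  have e : X - X * X = Xᴴ * (1 - X) * X + (1 - X)ᴴ * X * (1 - X) := by
    rw [h.1, h1.1]; noncomm_ring
  rw [e]
  exact (h1.conjTranspose_mul_mul_same X).add (h.conjTranspose_mul_mul_same (1 - X))

theorem aux_op {R : Type*} [Ring R] [Algebra ℝ R] (s : ℝ) (hs : s * s = 1 / 2) (P0 P1 Q0 Q1 : R)
    (h00 : Q0 * P0 = P0 * Q0) (h01 : Q1 * P0 = P0 * Q1)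
    (h10 : Q0 * P1 = P1 * Q0) (h11 : Q1 * P1 = P1 * Q1) :
    (4 - 4 * s) • (1 : R) - (8 * s) • (P0 * Q0 + P0 * Q1 + P1 * Q0 - P1 * Q1 - P0 - Q0) =
    ((2 : ℝ) • P0 - (1 : R) - s • ((2 : ℝ) • Q0 + (2 : ℝ) • Q1 - (2 : ℝ) • (1 : R))) *
    ((2 : ℝ) • P0 - (1 : R) - s • ((2 : ℝ) • Q0 + (2 : ℝ) • Q1 - (2 : ℝ) • (1 : R))) +
    ((2 : ℝ) • P1 - (1 : R) - s • ((2 : ℝ) • Q0 - (2 : ℝ) • Q1)) *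
    ((2 : ℝ) • P1 - (1 : R) - s • ((2 : ℝ) • Q0 - (2 : ℝ) • Q1)) +
    (4 : ℝ) • ((P0 - P0 * P0) + (P1 - P1 * P1) + (Q0 - Q0 * Q0) + (Q1 - Q1 * Q1)) := by
  simp only [mul_add, add_mul, mul_sub, sub_mul, smul_mul_assoc, mul_smul_comm, mul_one, one_mul,
    h00, h01, h10, h11]
  match_scalars <;> first | ring1 | nlinarith [hs]

theorem aux_main {n : Type*} [Fintype n] [DecidableEq n] {ρ P0 P1 Q0 Q1 : Matrix n n ℂ}
    (hρ : ρ.PosSemidef) (ht : ρ.trace = 1)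
    (hP0 : P0.PosSemidef) (hP0' : (1 - P0).PosSemidef)
    (hP1 : P1.PosSemidef) (hP1' : (1 - P1).PosSemidef)
    (hQ0 : Q0.PosSemidef) (hQ0' : (1 - Q0).PosSemidef)
    (hQ1 : Q1.PosSemidef) (hQ1' : (1 - Q1).PosSemidef)
    (h00 : Q0 * P0 = P0 * Q0) (h01 : Q1 * P0 = P0 * Q1)
    (h10 : Q0 * P1 = P1 * Q0) (h11 : Q1 * P1 = P1 * Q1) :
    (Matrix.trace (ρ * (P0 * Q0 + P0 * Q1 + P1 * Q0 - P1 * Q1 - P0 - Q0))).re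
      ≤ 1 / Real.sqrt 2 - 1 / 2 := by
  set s : ℝ := 1 / Real.sqrt 2 with hsd
  have hs0 : 0 < s := by positivity
  have hs : s * s = 1 / 2 := by
    rw [hsd, div_mul_div_comm, Real.mul_self_sqrt (by norm_num)]; norm_num
  have key := aux_op s hs P0 P1 Q0 Q1 h00 h01 h10 h11
  have sq : ∀ U : Matrix n n ℂ, U.IsHermitian → (U * U).PosSemidef := fun U hU => by
    have := Matrix.posSemidef_conjTranspose_mul_self U
    rwa [hU] at this
  have sm : ∀ (r : ℝ) (U : Matrix n n ℂ), U.IsHermitian → (r • U).IsHermitian := fun r U hU => by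
    rw [Matrix.IsHermitian, Matrix.conjTranspose_smul, hU]; simp
  have one : (1 : Matrix n n ℂ).IsHermitian := Matrix.isHermitian_one
  have hp := aux_trace_nonneg hρ ((((sq _ (((sm 2 _ hP0.1).sub one).sub
    (sm s _ (((sm 2 _ hQ0.1).add (sm 2 _ hQ1.1)).sub (sm 2 _ one)))))).add
    (sq _ (((sm 2 _ hP1.1).sub one).sub (sm s _ ((sm 2 _ hQ0.1).sub (sm 2 _ hQ1.1))))))) 
  have hq := aux_trace_nonneg hρ ((((aux_sub_sq hP0 hP0').add (aux_sub_sq hP1 hP1')).add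
    (aux_sub_sq hQ0 hQ0')).add (aux_sub_sq hQ1 hQ1'))
  have k2 := congrArg (fun X => (Matrix.trace (ρ * X)).re) key
  beta_reduce at k2
  rw [mul_add ρ, Matrix.trace_add, Complex.add_re, mul_sub ρ, Matrix.trace_sub, Complex.sub_re,
    mul_smul_comm, mul_smul_comm, mul_smul_comm, Matrix.trace_smul, Matrix.trace_smul,
    Matrix.trace_smul, mul_one, ht, Complex.smul_re, Complex.smul_re, Complex.smul_re,
    Complex.one_re, smul_eq_mul, smul_eq_mul, smul_eq_mul] at k2
  have : 0 ≤ s * ((s - 1 / 2) -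
    (Matrix.trace (ρ * (P0 * Q0 + P0 * Q1 + P1 * Q0 - P1 * Q1 - P0 - Q0))).re) := by
    nlinarith
  have := nonneg_of_mul_nonneg_right this hs0
  linarith

/-- the tilted-CH Bell value obeys the Tsirelson-type bound
`S^(τ) ≤ 1/√2 − 1/2` for every `τ ≥ 1`, in every dimension. -/
theorem tiltedCHBell_tsirelson
    (d : ℕ) (hd : 1 ≤ d)
    (ρ : Matrix (Fin d × Fin d) (Fin d × Fin d) ℂ)
    (hρ : IsDensityMatrix ρ)
    (A0 A1 B0 B1 : Matrix (Fin d) (Fin d) ℂ)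
    (hA0 : IsPOVMElem A0) (hA1 : IsPOVMElem A1)
    (hB0 : IsPOVMElem B0) (hB1 : IsPOVMElem B1)
    (τ : ℝ) (hτ : 1 ≤ τ) :
    tiltedCHBell τ ρ A0 A1 B0 B1 ≤ 1 / Real.sqrt 2 - 1 / 2 := by
  obtain ⟨hρ, ht⟩ := hρ
  have L : ∀ X : Matrix (Fin d) (Fin d) ℂ, IsPOVMElem X →
      (X ⊗ₖ (1 : Matrix (Fin d) (Fin d) ℂ)).PosSemidef ∧
      (1 - X ⊗ₖ (1 : Matrix (Fin d) (Fin d) ℂ)).PosSemidef := fun X hX => by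
    refine ⟨hX.1.kronecker Matrix.PosSemidef.one, ?_⟩
    have := hX.2.kronecker (Matrix.PosSemidef.one (n := Fin d) (R := ℂ))
    have e : (1 - X) ⊗ₖ (1 : Matrix (Fin d) (Fin d) ℂ) =
        1 - X ⊗ₖ (1 : Matrix (Fin d) (Fin d) ℂ) := by
      rw [← Matrix.one_kronecker_one]
      ext i j
      simp only [Matrix.kroneckerMap_apply, Matrix.sub_apply, sub_mul]
    rwa [e] at this
  have R : ∀ X : Matrix (Fin d) (Fin d) ℂ, IsPOVMElem X →
      ((1 : Matrix (Fin d) (Fin d) ℂ) ⊗ₖ X).PosSemidef ∧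
      (1 - (1 : Matrix (Fin d) (Fin d) ℂ) ⊗ₖ X).PosSemidef := fun X hX => by
    refine ⟨Matrix.PosSemidef.one.kronecker hX.1, ?_⟩
    have := (Matrix.PosSemidef.one (n := Fin d) (R := ℂ)).kronecker hX.2
    have e : (1 : Matrix (Fin d) (Fin d) ℂ) ⊗ₖ (1 - X) =
        1 - (1 : Matrix (Fin d) (Fin d) ℂ) ⊗ₖ X := by
      rw [← Matrix.one_kronecker_one]
      ext i j
      simp only [Matrix.kroneckerMap_apply, Matrix.sub_apply, mul_sub]
    rwa [e] at this
  have m : ∀ X Y : Matrix (Fin d) (Fin d) ℂ,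
      (X ⊗ₖ (1 : Matrix (Fin d) (Fin d) ℂ)) * ((1 : Matrix (Fin d) (Fin d) ℂ) ⊗ₖ Y) = X ⊗ₖ Y :=
    fun X Y => by rw [← Matrix.mul_kronecker_mul, mul_one, one_mul]
  have c : ∀ X Y : Matrix (Fin d) (Fin d) ℂ,
      ((1 : Matrix (Fin d) (Fin d) ℂ) ⊗ₖ Y) * (X ⊗ₖ (1 : Matrix (Fin d) (Fin d) ℂ)) =
      (X ⊗ₖ (1 : Matrix (Fin d) (Fin d) ℂ)) * ((1 : Matrix (Fin d) (Fin d) ℂ) ⊗ₖ Y) :=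
    fun X Y => by rw [m, ← Matrix.mul_kronecker_mul, mul_one, one_mul]
  have key := aux_main hρ ht (L _ hA0).1 (L _ hA0).2 (L _ hA1).1 (L _ hA1).2
    (R _ hB0).1 (R _ hB0).2 (R _ hB1).1 (R _ hB1).2 (c _ _) (c _ _) (c _ _) (c _ _)
  have n1 := aux_trace_nonneg hρ (L _ hA0).1
  have n2 := aux_trace_nonneg hρ (R _ hB0).1
  rw [m, m, m, m, mul_sub ρ, mul_sub ρ, Matrix.trace_sub, Matrix.trace_sub, Complex.sub_re,
    Complex.sub_re] at key
  unfold tiltedCHBell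
  nlinarith [mul_nonneg (sub_nonneg.2 hτ) n1, mul_nonneg (sub_nonneg.2 hτ) n2]
end
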